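/- arXiv:2411.14960 — 3 statements merged into one kernel-verified Lean document; each statement's English description precedes it below -/
import Mathlib

section
/- Let 𝐊 be an algebraic extension of 𝔽_p(t), let O_𝐊 be the integral closure of 𝔽_p[t] in 𝐊, and let 𝐤 be the constant field of 𝐊 (the algebraic closure of 𝔽_p in 𝐊). If 𝐤 is infinite and 𝐤 is first-order definable in the ring O_𝐊, then the polynomial ring 𝐤[t] is first-order definable in O_𝐊. -/
noncomputable section

/-- A normalized (surjective onto `ℤ`) discrete valuation on a field `K`, i.e. a
"prime" of a global function field. -/
structure FFPrime (K : Type) [Field K] where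
  ord : K → WithTop ℤ
  ord_zero : ord 0 = ⊤
  ord_ne_top : ∀ x : K, x ≠ 0 → ord x ≠ ⊤
  ord_one : ord 1 = 0
  ord_mul : ∀ x y : K, ord (x * y) = ord x + ord y
  ord_add : ∀ x y : K, min (ord x) (ord y) ≤ ord (x + y)
  ord_surj : ∀ n : ℤ, ∃ x : K, ord x = (n : WithTop ℤ)

namespace FFPrime

variable {K L : Type} [Field K] [Field L]

/-- `w` lies over `v` along `φ`, with ramification index `e`. -/
def LiesOverWith (w : FFPrime L) (v : FFPrime K) (φ : K →+* L) (e : ℕ) : Prop :=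
  0 < e ∧ ∀ x : K, w.ord (φ x) = ((e : ℤ) : WithTop ℤ) * v.ord x

/-- `w` lies over `v` along `φ`. -/
def LiesOver (w : FFPrime L) (v : FFPrime K) (φ : K →+* L) : Prop :=
  ∃ e : ℕ, w.LiesOverWith v φ e

open Classical in
/-- The ramification index `e(w/v)`. -/
noncomputable def ramIdx (w : FFPrime L) (v : FFPrime K) (φ : K →+* L) : ℕ :=
  if h : ∃ e : ℕ, w.LiesOverWith v φ e then h.choose else 0

/-- The residue field of `v` has exactly `n` elements. -/
def HasResidueCard (v : FFPrime K) (n : ℕ) : Prop :=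
  ∃ s : Finset K, s.card = n ∧ (∀ x ∈ s, 0 ≤ v.ord x) ∧
    (∀ x ∈ s, ∀ y ∈ s, x ≠ y → ¬ 0 < v.ord (x - y)) ∧
    (∀ z : K, 0 ≤ v.ord z → ∃ x ∈ s, 0 < v.ord (z - x))

open Classical in
/-- The residue (relative) degree `f(w/v)`: the unique `f ≥ 1` with
`#κ_w = (#κ_v) ^ f` (residue fields of global function fields are finite). -/
noncomputable def resDeg (w : FFPrime L) (v : FFPrime K) : ℕ :=
  if h : ∃ f : ℕ, 0 < f ∧ ∃ m n : ℕ, 1 < m ∧ v.HasResidueCard m ∧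
      w.HasResidueCard n ∧ n = m ^ f then h.choose else 0

/-- `v` splits completely in the extension given by `φ`: every prime above it has
ramification index and residue degree `1`. -/
def SplitsCompletely (v : FFPrime K) (φ : K →+* L) : Prop :=
  ∀ w : FFPrime L, w.LiesOver v φ → w.ramIdx v φ = 1 ∧ w.resDeg v = 1

/-- `v` is inert in the finite extension `M/K`: there is a unique prime above it, with
ramification index `1` and residue degree `[M : K]`. -/
def IsInert (v : FFPrime K) (M : Type) [Field M] [Algebra K M] : Prop :=
  (∃! w : FFPrime M, w.LiesOver v (algebraMap K M)) ∧
    ∀ w : FFPrime M, w.LiesOver v (algebraMap K M) →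
      w.ramIdx v (algebraMap K M) = 1 ∧ w.resDeg v = Module.finrank K M

/-- `v` ramifies in the extension given by `φ`: some prime above it has ramification
index `> 1`. -/
def Ramifies (v : FFPrime K) (φ : K →+* L) : Prop :=
  ∃ w : FFPrime L, w.LiesOver v φ ∧ 2 ≤ w.ramIdx v φ

/-- `ord_v z ≡ 0 mod q`. -/
def OrdDvd (v : FFPrime K) (q : ℕ) (z : K) : Prop :=
  ∃ n : ℤ, v.ord z = (((q : ℤ) * n : ℤ) : WithTop ℤ)

end FFPrime

/-- A nontrivial (rank one) valuation on a possibly infinite algebraic extension of a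
global function field, with values in `ℚ ∪ {∞}`. -/
structure FFVal (B : Type) [Field B] where
  ord : B → WithTop ℚ
  ord_zero : ord 0 = ⊤
  ord_ne_top : ∀ x : B, x ≠ 0 → ord x ≠ ⊤
  ord_one : ord 1 = 0
  ord_mul : ∀ x y : B, ord (x * y) = ord x + ord y
  ord_add : ∀ x y : B, min (ord x) (ord y) ≤ ord (x + y)
  nontrivial : ∃ x : B, ord x ≠ 0 ∧ ord x ≠ ⊤

/-- The valuation `V` of the big field restricts, up to a normalization factor `c`, to
the (normalized discrete) prime `v` of `K` along `φ`; i.e. `v` is the prime of `K`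
lying below `V`. -/
def FFVal.RestrictsTo {K B : Type} [Field K] [Field B] (V : FFVal B) (v : FFPrime K)
    (φ : K →+* B) : Prop :=
  ∃ c : ℚ, 0 < c ∧
    ∀ x : K, V.ord (φ x) = ((c : ℚ) : WithTop ℚ) * WithTop.map (fun n : ℤ => (n : ℚ)) (v.ord x)

/-- The algebraic extension `B` of the rational function field `F0 = 𝔽_p(t)` is
`q`-bounded: for every valuation of `B`, the `q`-adic valuations of the ramification
indices and residue degrees along every finite subextension are bounded. -/
def IsQBounded (q : ℕ) (F0 B : Type) [Field F0] [Field B] [Algebra F0 B] : Prop :=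
  ∀ V : FFVal B, ∃ C : ℕ,
    ∀ L : IntermediateField F0 B, FiniteDimensional F0 L →
      ∀ v0 : FFPrime F0, ∀ vL : FFPrime L,
        V.RestrictsTo v0 (algebraMap F0 B) →
        V.RestrictsTo vL L.val.toRingHom →
        padicValNat q (vL.ramIdx v0 (algebraMap F0 L)) ≤ C ∧
        padicValNat q (vL.resDeg v0) ≤ C

/-- The prime `v` of `K` has uniformly `q`-bounded ramification in `B`. -/
def UnifQBoundedRam (q : ℕ) {K : Type} [Field K] (B : Type) [Field B] [Algebra K B]
    (v : FFPrime K) : Prop :=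
  ∃ C : ℕ, ∀ F : IntermediateField K B, FiniteDimensional K F →
    ∀ w : FFPrime F, w.LiesOver v (algebraMap K F) →
      padicValNat q (w.ramIdx v (algebraMap K F)) ≤ C

/-- The prime `v` of `K` has uniformly absolutely bounded ramification in `B`. -/
def UnifAbsBoundedRam {K : Type} [Field K] (B : Type) [Field B] [Algebra K B]
    (v : FFPrime K) : Prop :=
  ∃ C : ℕ, ∀ F : IntermediateField K B, FiniteDimensional K F →
    ∀ w : FFPrime F, w.LiesOver v (algebraMap K F) →
      w.ramIdx v (algebraMap K F) ≤ C

/-- The prime `v` of `K` has uniformly `q`-bounded relative (residue) degree in `B`. -/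
def UnifQBoundedRes (q : ℕ) {K : Type} [Field K] (B : Type) [Field B] [Algebra K B]
    (v : FFPrime K) : Prop :=
  ∃ C : ℕ, ∀ F : IntermediateField K B, FiniteDimensional K F →
    ∀ w : FFPrime F, w.LiesOver v (algebraMap K F) →
      padicValNat q (w.resDeg v) ≤ C

/-- The prime `v` of `K` is uniformly `q`-bounded in `B`. -/
def UniformlyQBoundedAt (q : ℕ) {K : Type} [Field K] (B : Type) [Field B] [Algebra K B]
    (v : FFPrime K) : Prop :=
  UnifQBoundedRam q B v ∧ UnifQBoundedRes q B v

/-- The integral closure in `B` of the valuation ring `O_v = {x ∈ K : ord_v x ≥ 0}`. -/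
def valIntegralClosure {K : Type} [Field K] (v : FFPrime K) (B : Type) [Field B]
    [Algebra K B] : Set B :=
  {x : B | ∃ P : Polynomial K, P.Monic ∧ (∀ n : ℕ, 0 ≤ v.ord (P.coeff n)) ∧
    Polynomial.aeval x P = 0}

/-- The integral closure in `B` of the ring `O_{K,S}` of `S`-integers of `K`. -/
def sIntegralClosure {K : Type} [Field K] (S : Set (FFPrime K)) (B : Type) [Field B]
    [Algebra K B] : Set B :=
  {x : B | ∃ P : Polynomial K, P.Monic ∧
    (∀ n : ℕ, ∀ v : FFPrime K, v ∉ S → 0 ≤ v.ord (P.coeff n)) ∧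
    Polynomial.aeval x P = 0}

/-- Elements of `B` that are units at every prime of `B` lying over a prime of `S`. -/
def unitsAtS {K : Type} [Field K] (S : Set (FFPrime K)) (B : Type) [Field B]
    [Algebra K B] : Set B :=
  {x : B | ∀ V : FFVal B, (∃ v ∈ S, V.RestrictsTo v (algebraMap K B)) → V.ord x = 0}

/-- Elements `x` of `B` with `ord (x - 1) > 0` at every prime of `B` lying over a
prime of `S`. -/
def onesAtS {K : Type} [Field K] (S : Set (FFPrime K)) (B : Type) [Field B]
    [Algebra K B] : Set B :=
  {x : B | ∀ V : FFVal B, (∃ v ∈ S, V.RestrictsTo v (algebraMap K B)) → 0 < V.ord (x - 1)}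

/-- A subset of a commutative ring is first-order definable in the language of rings
`{0, 1, +, ·}` with parameters from the ring. -/
def FODefinable {R : Type} [CommRing R] (X : Set R) : Prop :=
  letI : FirstOrder.Ring.CompatibleRing R := FirstOrder.Ring.compatibleRingOfRing R
  Set.Definable₁ (Set.univ : Set R) FirstOrder.Language.ring X

/-- A subset of a commutative ring is existentially (diophantine) definable: it is cut
out by a block of existential quantifiers followed by a system of polynomial equations,
with parameters (coefficients) from the ring. -/
def ExistDefinable {R : Type} [CommRing R] (X : Set R) : Prop :=
  ∃ (k m : ℕ) (P : Fin m → MvPolynomial (Fin (k + 1)) R),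
    ∀ x : R, x ∈ X ↔ ∃ y : Fin k → R, ∀ i : Fin m,
      MvPolynomial.eval (Fin.cons x y) (P i) = 0

/-- Solvability of the norm equation `N(y) = b·x^q + b^q` over (every realization of)
the tower `L₂(a^{1/q})/L₂`, where `L₁ = F((1+(b x^q+b^q)⁻¹)^{1/q})` and
`L₂ = L₁((1+(a+a⁻¹)b⁻¹)^{1/q})`. -/
def NormTower2Solvable (q : ℕ) (F : Type) [Field F] (a b x : F) : Prop :=
  ∀ (M1 : Type) [Field M1] [Algebra F M1] (α1 : M1),
    α1 ^ q = algebraMap F M1 (1 + (b * x ^ q + b ^ q)⁻¹) →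
    IntermediateField.adjoin F {α1} = ⊤ →
    ∀ (M2 : Type) [Field M2] [Algebra M1 M2] (α2 : M2),
      α2 ^ q = algebraMap M1 M2 (algebraMap F M1 (1 + (a + a⁻¹) * b⁻¹)) →
      IntermediateField.adjoin M1 {α2} = ⊤ →
      ∀ (M3 : Type) [Field M3] [Algebra M2 M3] (α3 : M3),
        α3 ^ q = algebraMap M2 M3 (algebraMap M1 M2 (algebraMap F M1 a)) →
        IntermediateField.adjoin M2 {α3} = ⊤ →
        ∃ y : M3, Algebra.norm M2 y = algebraMap M1 M2 (algebraMap F M1 (b * x ^ q + b ^ q))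

/-- Solvability of the norm equation `N(y) = b·x^q + b^q` over (every realization of)
the tower `L₄(a^{1/q})/L₄`, where `L₁ = F((1+(b x^q+b^q)⁻¹)^{1/q})`,
`L₃ = L₁((1+x⁻¹)^{1/q})` and `L₄ = L₃((1+(a+a⁻¹)x⁻¹)^{1/q})`. -/
def NormTower4Solvable (q : ℕ) (F : Type) [Field F] (a b x : F) : Prop :=
  ∀ (M1 : Type) [Field M1] [Algebra F M1] (α1 : M1),
    α1 ^ q = algebraMap F M1 (1 + (b * x ^ q + b ^ q)⁻¹) →
    IntermediateField.adjoin F {α1} = ⊤ →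
    ∀ (M3 : Type) [Field M3] [Algebra M1 M3] (α3 : M3),
      α3 ^ q = algebraMap M1 M3 (algebraMap F M1 (1 + x⁻¹)) →
      IntermediateField.adjoin M1 {α3} = ⊤ →
      ∀ (M4 : Type) [Field M4] [Algebra M3 M4] (α4 : M4),
        α4 ^ q = algebraMap M3 M4 (algebraMap M1 M3 (algebraMap F M1 (1 + (a + a⁻¹) * x⁻¹))) →
        IntermediateField.adjoin M3 {α4} = ⊤ →
        ∀ (M5 : Type) [Field M5] [Algebra M4 M5] (α5 : M5),
          α5 ^ q = algebraMap M4 M5 (algebraMap M3 M4 (algebraMap M1 M3 (algebraMap F M1 a))) →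
          IntermediateField.adjoin M4 {α5} = ⊤ →
          ∃ y : M5, Algebra.norm M4 y =
            algebraMap M3 M4 (algebraMap M1 M3 (algebraMap F M1 (b * x ^ q + b ^ q)))

/-- Unsolvability of the norm equation `N(y) = b·x^q + b^q` over (every realization of)
the tower `L₄(a^{1/q})/L₄` as in `NormTower4Solvable`. -/
def NormTower4Unsolvable (q : ℕ) (F : Type) [Field F] (a b x : F) : Prop :=
  ∀ (M1 : Type) [Field M1] [Algebra F M1] (α1 : M1),
    α1 ^ q = algebraMap F M1 (1 + (b * x ^ q + b ^ q)⁻¹) →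
    IntermediateField.adjoin F {α1} = ⊤ →
    ∀ (M3 : Type) [Field M3] [Algebra M1 M3] (α3 : M3),
      α3 ^ q = algebraMap M1 M3 (algebraMap F M1 (1 + x⁻¹)) →
      IntermediateField.adjoin M1 {α3} = ⊤ →
      ∀ (M4 : Type) [Field M4] [Algebra M3 M4] (α4 : M4),
        α4 ^ q = algebraMap M3 M4 (algebraMap M1 M3 (algebraMap F M1 (1 + (a + a⁻¹) * x⁻¹))) →
        IntermediateField.adjoin M3 {α4} = ⊤ →
        ∀ (M5 : Type) [Field M5] [Algebra M4 M5] (α5 : M5),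
          α5 ^ q = algebraMap M4 M5 (algebraMap M3 M4 (algebraMap M1 M3 (algebraMap F M1 a))) →
          IntermediateField.adjoin M4 {α5} = ⊤ →
          ¬ ∃ y : M5, Algebra.norm M4 y =
            algebraMap M3 M4 (algebraMap M1 M3 (algebraMap F M1 (b * x ^ q + b ^ q)))

/-- The integral closure `O_BK` of `𝔽_p[t]` in an algebraic extension `BK` of
`𝔽_p(t)`. -/
def ringOfIntegralFunctions (p : ℕ) [Fact p.Prime] (BK : Type) [Field BK]
    [Algebra (RatFunc (ZMod p)) BK] [Algebra (Polynomial (ZMod p)) BK]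
    [IsScalarTower (Polynomial (ZMod p)) (RatFunc (ZMod p)) BK] : Subring BK :=
  (integralClosure (Polynomial (ZMod p)) BK).toSubring

/-!
An element `f` of the integral closure of `𝔽_p[t]` lies in `k[t]` if and only if for every constant
`a` there is a constant `b` such that `t - a` divides `f - b`; this condition is first-order as soon
as `k` is definable.

If `f ∈ k[t]`, take `b = f(a)`. Conversely, let `P(t, Y)` be the minimal polynomial of `f` over
`k[t]` and suppose that its degree `n` in `Y` is at least `2`. Writing `f = b + (t - a) h`, the
polynomial `P` is the minimal polynomial of `h` with its roots scaled by `t - a` and translated by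
`b`, hence `P` lies in the `n`-th power of the ideal `(t - a, Y - b)`: the curve `P = 0` is singular
at `(a, b)`. So `t - a` divides both partial derivatives of `P` evaluated at `f`. This happens for
infinitely many `a`, whereas a nonzero integral element is divisible by only finitely many `t - a`.
Therefore both partial derivatives vanish at `f`, and they are zero because their degrees in `Y` are
smaller than `n`. Over the perfect field `k` this makes `P` a `p`-th power, contradicting its
irreducibility.
-/

section Definability

open FirstOrder

section Quantifiers

variable {L : Language} {M : Type*} [L.Structure M] {A : Set M} {α : Type*}

theorem definable_ofPred_exists {P : (α → M) → M → Prop}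
    (h : A.Definable L {w : α ⊕ Unit → M | P (w ∘ Sum.inl) (w (Sum.inr ()))}) :
    A.Definable L {v | ∃ x, P v x} := by
  convert h.exists_of_finite using 3
  exact (Equiv.funUnique Unit M).symm.exists_congr fun _ => Iff.rfl

theorem definable_ofPred_forall {P : (α → M) → M → Prop}
    (h : A.Definable L {w : α ⊕ Unit → M | P (w ∘ Sum.inl) (w (Sum.inr ()))}) :
    A.Definable L {v | ∀ x, P v x} := by
  convert h.forall_of_finite using 3
  exact (Equiv.funUnique Unit M).symm.forall_congr fun _ => Iff.rfl

theorem definable_ofPred_apply_mem {k : Set M} (hk : A.Definable₁ L k) (i : α) :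
    A.Definable L {v : α → M | v i ∈ k} :=
  hk.preimage_comp fun _ => i

end Quantifiers

section RingOperations

variable {R : Type*} [CommRing R] [Ring.CompatibleRing R] {A : Set R} {α : Type*}
  {f g : (α → R) → R}

theorem definableFun_mul (hf : A.DefinableFun Language.ring f)
    (hg : A.DefinableFun Language.ring g) :
    A.DefinableFun Language.ring fun v => f v * g v := by
  let xy : Language.ring.Term (Fin 2) := .var 0 * .var 1
  have hxy : A.DefinableFun Language.ring xy.realize := xy.definableFun_realize.of_empty
  simpa [xy] using hxy.comp (g := fun v => ![f v, g v]) (Fin.forall_fin_two.2 ⟨hf, hg⟩)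

theorem definableFun_sub (hf : A.DefinableFun Language.ring f)
    (hg : A.DefinableFun Language.ring g) :
    A.DefinableFun Language.ring fun v => f v - g v := by
  let x_sub_y : Language.ring.Term (Fin 2) := .var 0 + -.var 1
  have h : A.DefinableFun Language.ring x_sub_y.realize := x_sub_y.definableFun_realize.of_empty
  simpa [x_sub_y, ← sub_eq_add_neg] using
    h.comp (g := fun v => ![f v, g v]) (Fin.forall_fin_two.2 ⟨hf, hg⟩)

theorem definable_ofPred_dvd (hf : A.DefinableFun Language.ring f)
    (hg : A.DefinableFun Language.ring g) :
    A.Definable Language.ring {v | f v ∣ g v} := by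
  have lift {e : (α → R) → R} (he : A.DefinableFun Language.ring e) :
      A.DefinableFun Language.ring fun w : α ⊕ Unit → R => e (w ∘ Sum.inl) :=
    he.preimage_comp (Option.map Sum.inl)
  exact definable_ofPred_exists
    ((lift hg).ofPred_eq (definableFun_mul (lift hf) (.proj _)))

end RingOperations

theorem foDefinable_setOf_forall_exists_sub_dvd_sub {R : Type} [CommRing R] (t : R) {k : Set R}
    (hk : FODefinable k) : FODefinable {f | ∀ a ∈ k, ∃ b ∈ k, t - a ∣ f - b} := by
  let _ : Ring.CompatibleRing R := Ring.compatibleRingOfRing R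
  refine definable_ofPred_forall ((definable_ofPred_apply_mem hk _).himp
    (definable_ofPred_exists ((definable_ofPred_apply_mem hk _).inter ?_)))
  exact definable_ofPred_dvd
    (definableFun_sub (Language.definableFun_const _ _ (Set.mem_univ t)) (.proj _))
    (definableFun_sub (.proj _) (.proj _))

end Definability

section IntegralExtensions

open Polynomial

theorem derivation_apply_mem_of_mem_sq {R A : Type*} [CommSemiring R] [CommRing A] [Algebra R A]
    (D : Derivation R A A) {J : Ideal A} {x : A} (hx : x ∈ J ^ 2) : D x ∈ J := by
  rw [pow_two] at hx
  induction hx using Submodule.mul_induction_on' with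
  | mem_mul_mem m hm n hn =>
    rw [D.leibniz]
    exact J.add_mem (J.mul_mem_right _ hm) (J.mul_mem_right _ hn)
  | add y _ z _ hy hz =>
    rw [map_add]
    exact J.add_mem hy hz

theorem aeval_scaleRoots_mem_pow {R A : Type*} [CommRing R] [CommRing A] [Algebra R A]
    {J : Ideal A} {u : R} {x : A} (hu : algebraMap R A u ∈ J) (hx : x ∈ J) (M : R[X]) :
    aeval x (M.scaleRoots u) ∈ J ^ M.natDegree := by
  rw [aeval_eq_sum_range, natDegree_scaleRoots]
  refine Ideal.sum_mem _ fun i hi => ?_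
  have hdeg : M.natDegree - i + i = M.natDegree :=
    Nat.sub_add_cancel (Nat.lt_succ_iff.1 (Finset.mem_range.1 hi))
  have hmem := Ideal.mul_mem_mul (Ideal.pow_mem_pow hu (M.natDegree - i)) (Ideal.pow_mem_pow hx i)
  rw [← pow_add, hdeg] at hmem
  rw [coeff_scaleRoots, mul_smul, Algebra.smul_def, Algebra.smul_def, map_pow]
  exact Ideal.mul_mem_left _ _ hmem

variable {R B : Type*} [CommRing R] [IsDomain R] [IsIntegrallyClosed R]
  [CommRing B] [IsDomain B] [Algebra R B] [Module.IsTorsionFree R B]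

theorem minpoly_add_algebraMap_of_isIntegrallyClosed {x : B} (hx : IsIntegral R x) (c : R) :
    minpoly R (x + algebraMap R B c) = (minpoly R x).comp (X - C c) := by
  have hadd : IsIntegral R (x + algebraMap R B c) := hx.add isIntegral_algebraMap
  refine (minpoly.IsIntegrallyClosed.unique_of_degree_le_degree_minpoly
    ((minpoly.monic hx).comp_X_sub_C c) (by simp [aeval_comp]) ?_).symm
  have hroot : aeval x ((minpoly R (x + algebraMap R B c)).comp (X + C c)) = 0 := by
    simp [aeval_comp]
  have hdvd := minpoly.isIntegrallyClosed_dvd hx hroot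
  have hle := natDegree_le_of_dvd hdvd ((minpoly.monic hadd).comp_X_add_C c).ne_zero
  rw [natDegree_comp, natDegree_X_add_C, mul_one] at hle
  rw [degree_eq_natDegree ((minpoly.monic hx).comp_X_sub_C c).ne_zero,
    degree_eq_natDegree (minpoly.ne_zero hadd), natDegree_comp, natDegree_X_sub_C, mul_one]
  exact_mod_cast hle

variable [Algebra.IsIntegral R B]

theorem minpoly_mem_sq_comap_span {u c : R} {f : B} (hu : u ≠ 0)
    (hdvd : algebraMap R B u ∣ f - algebraMap R B c) (hdeg : 2 ≤ (minpoly R f).natDegree) :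
    minpoly R f ∈ Ideal.comap (aeval f) (Ideal.span {algebraMap R B u}) ^ 2 := by
  obtain ⟨h, hh⟩ := hdvd
  have hint : IsIntegral R h := Algebra.IsIntegral.isIntegral h
  have hf : f = u • h + algebraMap R B c := by rw [Algebra.smul_def, ← hh, sub_add_cancel]
  have hmin : minpoly R f = aeval (X - C c) ((minpoly R h).scaleRoots u) := by
    rw [hf, minpoly_add_algebraMap_of_isIntegrallyClosed (hint.smul u),
      IsIntegrallyClosed.minpoly_smul hu hint, comp_eq_aeval]
  have hdegh : (minpoly R f).natDegree = (minpoly R h).natDegree := by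
    simp [hmin, ← comp_eq_aeval, natDegree_comp]
  have huJ : algebraMap R R[X] u ∈ Ideal.comap (aeval f) (Ideal.span {algebraMap R B u}) := by
    simp
  have hXJ : (X - C c : R[X]) ∈ Ideal.comap (aeval f) (Ideal.span {algebraMap R B u}) := by
    simp [Ideal.mem_span_singleton, hh]
  rw [hdegh] at hdeg
  rw [hmin]
  exact Ideal.pow_le_pow_right hdeg (aeval_scaleRoots_mem_pow huJ hXJ _)

theorem algebraMap_dvd_aeval_derivation_minpoly {S : Type*} [CommSemiring S] [Algebra S R[X]]
    (D : Derivation S R[X] R[X]) {u c : R} {f : B} (hu : u ≠ 0)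
    (hdvd : algebraMap R B u ∣ f - algebraMap R B c) (hdeg : 2 ≤ (minpoly R f).natDegree) :
    algebraMap R B u ∣ aeval f (D (minpoly R f)) :=
  Ideal.mem_span_singleton.1
    (derivation_apply_mem_of_mem_sq D (minpoly_mem_sq_comap_span hu hdvd hdeg))

theorem dvd_of_algebraMap_dvd_algebraMap {x y : R} (h : algebraMap R B x ∣ algebraMap R B y) :
    x ∣ y := by
  have hinj : Function.Injective (algebraMap R B) := FaithfulSMul.algebraMap_injective R B
  obtain ⟨z, hz⟩ := h
  rcases eq_or_ne x 0 with rfl | hx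
  · rw [map_zero, zero_mul, map_eq_zero_iff _ hinj] at hz
    exact hz ▸ dvd_rfl
  have hdeg : (minpoly R z).natDegree = 1 := by
    rw [← natDegree_scaleRoots _ x,
      ← IsIntegrallyClosed.minpoly_smul hx (Algebra.IsIntegral.isIntegral z),
      Algebra.smul_def, ← hz]
    exact minpoly.natDegree_eq_one_iff.2 ⟨y, rfl⟩
  obtain ⟨w, rfl⟩ := minpoly.natDegree_eq_one_iff.1 hdeg
  exact ⟨w, hinj (by rw [hz, map_mul])⟩

end IntegralExtensions

section PlaneCurves

open Polynomial

/-- The partial derivative of a bivariate polynomial in `R[X][X]` with respect to the inner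
variable, obtained by differentiating each coefficient. -/
def coeffwiseDerivative (R : Type*) [CommRing R] : Derivation R R[X][X] R[X][X] :=
  PolynomialModule.equivPolynomialSelf.compDer derivative'.mapCoeffs

theorem coeff_coeffwiseDerivative {R : Type*} [CommRing R] (P : R[X][X]) (n : ℕ) :
    (coeffwiseDerivative R P).coeff n = derivative (P.coeff n) :=
  rfl

theorem degree_coeffwiseDerivative_lt_of_monic {R : Type*} [CommRing R] [Nontrivial R]
    {P : R[X][X]} (hP : P.Monic) : (coeffwiseDerivative R P).degree < P.degree := by
  rw [degree_eq_natDegree hP.ne_zero, degree_lt_iff_coeff_zero]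
  intro m hm
  rw [coeff_coeffwiseDerivative]
  rcases hm.eq_or_lt with rfl | hlt
  · rw [hP.coeff_natDegree, derivative_one]
  · rw [coeff_eq_zero_of_natDegree_lt hlt, derivative_zero]

variable {k : Type*} [Field k]

theorem mem_range_frobenius_of_derivative_eq_zero (p : ℕ) [Fact p.Prime] [CharP k p]
    [PerfectRing k p] {q : k[X]} (hq : derivative q = 0) : q ∈ Set.range (frobenius k[X] p) :=
  ⟨_, by rw [frobenius_def, ← polynomial_expand_eq,
    expand_contract p hq (Fact.out : p.Prime).ne_zero]⟩

theorem exists_pow_eq_of_partial_derivatives_eq_zero (p : ℕ) [Fact p.Prime] [CharP k p]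
    [PerfectRing k p] {P : k[X][X]} (hX : derivative P = 0) (hT : coeffwiseDerivative k P = 0) :
    ∃ G : k[X][X], G ^ p = P := by
  have hp : p ≠ 0 := (Fact.out : p.Prime).ne_zero
  have hlift : contract p P ∈ lifts (frobenius k[X] p) := by
    rw [lifts_iff_coeff_lifts]
    intro n
    rw [coeff_contract hp]
    refine mem_range_frobenius_of_derivative_eq_zero p ?_
    rw [← coeff_coeffwiseDerivative, hT, coeff_zero]
  obtain ⟨G, hG⟩ := (mem_lifts _).1 hlift
  exact ⟨G, by rw [← map_frobenius_expand, map_expand, hG, expand_contract p hX hp]⟩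

theorem not_irreducible_of_partial_derivatives_eq_zero [PerfectField k] {P : k[X][X]}
    (hX : derivative P = 0) (hT : coeffwiseDerivative k P = 0) : ¬ Irreducible P := by
  rcases CharP.exists' k with _ | ⟨p, _, _⟩
  · have hcoeff : derivative (P.coeff 0) = 0 := by
      rw [← coeff_coeffwiseDerivative, hT, coeff_zero]
    rw [eq_C_of_derivative_eq_zero hX, eq_C_of_derivative_eq_zero hcoeff]
    intro hirr
    refine hirr.not_isUnit (((isUnit_iff_ne_zero.2 fun h0 => hirr.ne_zero ?_).map C).map C)
    rw [h0, map_zero, map_zero]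
  · have : PerfectRing k p := PerfectField.toPerfectRing p
    obtain ⟨G, rfl⟩ := exists_pow_eq_of_partial_derivatives_eq_zero p hX hT
    exact not_irreducible_pow (Fact.out : p.Prime).ne_one

variable {B : Type*} [CommRing B] [IsDomain B] [Algebra k[X] B] [Module.IsTorsionFree k[X] B]
  [Algebra.IsIntegral k[X] B]

theorem finite_setOf_X_sub_C_dvd {y : B} (hy : y ≠ 0) :
    {a : k | algebraMap k[X] B (X - C a) ∣ y}.Finite := by
  obtain ⟨r, hr, hdvd⟩ := (Algebra.IsIntegral.isIntegral (R := k[X]) y).isAlgebraic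
    |>.exists_nonzero_dvd (mem_nonZeroDivisors_of_ne_zero hy)
  refine (finite_setOfPred_isRoot hr).subset fun a ha => ?_
  exact dvd_iff_isRoot.1 (dvd_of_algebraMap_dvd_algebraMap (ha.trans hdvd))

theorem mem_range_algebraMap_of_infinite_setOf_dvd [PerfectField k] {f : B}
    (hinf : {a : k | ∃ b : k, algebraMap k[X] B (X - C a) ∣ f - algebraMap k[X] B (C b)}.Infinite) :
    f ∈ (algebraMap k[X] B).range := by
  have hint : IsIntegral k[X] f := Algebra.IsIntegral.isIntegral f
  rw [← minpoly.natDegree_eq_one_iff (A := k[X])]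
  by_contra hdeg
  have hdeg2 : 2 ≤ (minpoly k[X] f).natDegree := by
    have := minpoly.natDegree_pos hint
    omega
  have aeval_derivation_eq_zero (D : Derivation k k[X][X] k[X][X]) :
      aeval f (D (minpoly k[X] f)) = 0 := by
    by_contra hne
    refine hinf ((finite_setOf_X_sub_C_dvd hne).subset fun a ⟨b, hb⟩ => ?_)
    exact algebraMap_dvd_aeval_derivation_minpoly D (X_sub_C_ne_zero a) hb hdeg2
  have derivation_eq_zero (D : Derivation k k[X][X] k[X][X])
      (hlt : (D (minpoly k[X] f)).degree < (minpoly k[X] f).degree) : D (minpoly k[X] f) = 0 :=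
    eq_zero_of_dvd_of_degree_lt
      (minpoly.isIntegrallyClosed_dvd hint (aeval_derivation_eq_zero D)) hlt
  have hX : derivative (minpoly k[X] f) = 0 :=
    derivation_eq_zero (derivative'.restrictScalars k) (degree_derivative_lt (minpoly.ne_zero hint))
  have hT : coeffwiseDerivative k (minpoly k[X] f) = 0 :=
    derivation_eq_zero _ (degree_coeffwiseDerivative_lt_of_monic (minpoly.monic hint))
  exact not_irreducible_of_partial_derivatives_eq_zero hX hT (minpoly.irreducible hint)

theorem mem_range_algebraMap_iff_forall_exists_dvd [PerfectField k] [Infinite k] (f : B) :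
    f ∈ (algebraMap k[X] B).range ↔
      ∀ a : k, ∃ b : k, algebraMap k[X] B (X - C a) ∣ f - algebraMap k[X] B (C b) := by
  constructor
  · rintro ⟨g, rfl⟩ a
    refine ⟨g.eval a, ?_⟩
    rw [← map_sub]
    exact map_dvd _ X_sub_C_dvd_sub_C_eval
  · intro hf
    refine mem_range_algebraMap_of_infinite_setOf_dvd ?_
    rw [Set.eq_univ_of_forall hf]
    exact Set.infinite_univ

end PlaneCurves

section ConstantField

open Polynomial

theorem foDefinable_range_algebraMap_polynomial {k : Type*} {B : Type} [Field k] [PerfectField k]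
    [Infinite k] [CommRing B] [IsDomain B] [Algebra k[X] B] [Module.IsTorsionFree k[X] B]
    [Algebra.IsIntegral k[X] B]
    (hk : FODefinable (Set.range fun a : k => algebraMap k[X] B (C a))) :
    FODefinable (Set.range (algebraMap k[X] B)) := by
  convert foDefinable_setOf_forall_exists_sub_dvd_sub (algebraMap k[X] B X) hk using 1
  ext f
  rw [← RingHom.coe_range, SetLike.mem_coe, mem_range_algebraMap_iff_forall_exists_dvd]
  simp

variable (F L : Type*) [Field F] [Field L] [Algebra F[X] L] [Algebra F L] [IsScalarTower F F[X] L]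

/-- The inclusion of the constant field of `L`, that is, of the algebraic closure of `F` in `L`,
into the integral closure of `F[X]` in `L`. -/
def constantFieldHom : algebraicClosure F L →+* integralClosure F[X] L :=
  (algebraMap (algebraicClosure F L) L).codRestrict (integralClosure F[X] L) fun a =>
    (mem_algebraicClosure_iff'.1 a.2).tower_top

/-- The evaluation at `t` of polynomials over the constant field `k` of `L`, with values in the
integral closure of `F[X]` in `L`, where `t` is the image of `X` in `L`. Its range is `k[t]`. -/
def constantFieldPolynomialHom : (algebraicClosure F L)[X] →+* integralClosure F[X] L :=
  eval₂RingHom (constantFieldHom F L) (algebraMap F[X] _ X)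

theorem coe_constantFieldPolynomialHom (q : (algebraicClosure F L)[X]) :
    (constantFieldPolynomialHom F L q : L) = aeval (algebraMap F[X] L X) q :=
  hom_eval₂ q (constantFieldHom F L) (integralClosure F[X] L).val.toRingHom _

theorem constantFieldPolynomialHom_comp_mapRingHom :
    (constantFieldPolynomialHom F L).comp (mapRingHom (algebraMap F (algebraicClosure F L))) =
      algebraMap F[X] (integralClosure F[X] L) := by
  refine ringHom_ext (fun a => Subtype.ext ?_) (Subtype.ext ?_)
  · simpa [coe_constantFieldPolynomialHom] using IsScalarTower.algebraMap_apply F F[X] L a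
  · simp [coe_constantFieldPolynomialHom]

theorem constantFieldPolynomialHom_isIntegral : (constantFieldPolynomialHom F L).IsIntegral := by
  refine RingHom.IsIntegral.tower_top (mapRingHom (algebraMap F (algebraicClosure F L))) _ ?_
  rw [constantFieldPolynomialHom_comp_mapRingHom]
  exact algebraMap_isIntegral_iff.2 inferInstance

theorem transcendental_algebraMap_X [FaithfulSMul F[X] L] :
    Transcendental F (algebraMap F[X] L X) :=
  (transcendental_algebraMap_iff (FaithfulSMul.algebraMap_injective F[X] L)).2 (transcendental_X F)

theorem constantFieldPolynomialHom_injective [FaithfulSMul F[X] L] :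
    Function.Injective (constantFieldPolynomialHom F L) := by
  have htrans : Transcendental (algebraicClosure F L) (algebraMap F[X] L X) :=
    (Algebra.IsAlgebraic.transcendental_iff F _).1 (transcendental_algebraMap_X F L)
  refine .of_comp (f := Subtype.val) fun q r hqr => transcendental_iff_injective.1 htrans ?_
  simpa only [Function.comp_apply, coe_constantFieldPolynomialHom] using hqr

theorem range_constantFieldPolynomialHom_C :
    (Set.range fun a => constantFieldPolynomialHom F L (C a)) =
      {y : integralClosure F[X] L | IsAlgebraic F (y : L)} := by
  ext y
  simp [Subtype.ext_iff, coe_constantFieldPolynomialHom, mem_algebraicClosure_iff]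

theorem range_constantFieldPolynomialHom :
    Set.range (constantFieldPolynomialHom F L) =
      {y : integralClosure F[X] L | ∃ P : L[X], (∀ n, IsAlgebraic F (P.coeff n)) ∧
        P.eval (algebraMap F[X] L X) = y} := by
  have mem_lifts_iff (P : L[X]) : P ∈ lifts (algebraMap (algebraicClosure F L) L) ↔
      ∀ n, IsAlgebraic F (P.coeff n) := by
    simp [lifts_iff_coeff_lifts, mem_algebraicClosure_iff]
  ext y
  simp only [Set.mem_range, Set.mem_ofPred_eq, ← mem_lifts_iff, mem_lifts]
  constructor
  · rintro ⟨q, rfl⟩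
    exact ⟨_, ⟨q, rfl⟩, by rw [eval_map_algebraMap, coe_constantFieldPolynomialHom]⟩
  · rintro ⟨_, ⟨q, rfl⟩, hq⟩
    exact ⟨q, Subtype.ext (by rw [coe_constantFieldPolynomialHom, ← eval_map_algebraMap, hq])⟩

end ConstantField

open Polynomial in
theorem statement5_general {F : Type*} {L : Type} [Field F] [PerfectField F] [Field L]
    [Algebra F[X] L] [FaithfulSMul F[X] L] [Algebra F L] [IsScalarTower F F[X] L]
    (hinf : {x : L | IsAlgebraic F x}.Infinite)
    (hdef : FODefinable {y : integralClosure F[X] L | IsAlgebraic F (y : L)}) :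
    FODefinable {y : integralClosure F[X] L | ∃ P : L[X], (∀ n, IsAlgebraic F (P.coeff n)) ∧
      P.eval (algebraMap F[X] L X) = y} := by
  have : PerfectField (algebraicClosure F L) := Algebra.IsAlgebraic.perfectField (K := F)
  have : Infinite (algebraicClosure F L) :=
    Set.infinite_coe_iff.2 (hinf.mono fun _ => mem_algebraicClosure_iff.2)
  let _ : Algebra (algebraicClosure F L)[X] (integralClosure F[X] L) :=
    (constantFieldPolynomialHom F L).toAlgebra
  have : Module.IsTorsionFree (algebraicClosure F L)[X] (integralClosure F[X] L) :=
    Module.isTorsionFree_iff_algebraMap_injective.2 (constantFieldPolynomialHom_injective F L)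
  have : Algebra.IsIntegral (algebraicClosure F L)[X] (integralClosure F[X] L) :=
    algebraMap_isIntegral_iff.1 (constantFieldPolynomialHom_isIntegral F L)
  rw [← range_constantFieldPolynomialHom_C] at hdef
  rw [← range_constantFieldPolynomialHom]
  exact foDefinable_range_algebraMap_polynomial hdef

/-- Let `BK` be an algebraic extension of `𝔽_p(t)`, `O_BK` the
integral closure of `𝔽_p[t]` in `BK`, and `k` the constant field of `BK` (elements
algebraic over `𝔽_p`).  If `k` is infinite and `k` is first-order definable in the
ring `O_BK`, then the polynomial ring `k[t]` is first-order definable in `O_BK`. -/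
theorem statement5 (p : ℕ) [Fact p.Prime]
    (BK : Type) [Field BK] [Algebra (RatFunc (ZMod p)) BK]
    [Algebra.IsAlgebraic (RatFunc (ZMod p)) BK]
    [Algebra (Polynomial (ZMod p)) BK]
    [IsScalarTower (Polynomial (ZMod p)) (RatFunc (ZMod p)) BK]
    [Algebra (ZMod p) BK] [IsScalarTower (ZMod p) (Polynomial (ZMod p)) BK]
    (hinf : {x : BK | IsAlgebraic (ZMod p) x}.Infinite)
    (hdef : FODefinable
      {y : ↥(ringOfIntegralFunctions p BK) | IsAlgebraic (ZMod p) (y : BK)}) :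
    FODefinable
      {y : ↥(ringOfIntegralFunctions p BK) | ∃ P : Polynomial BK,
        (∀ n : ℕ, IsAlgebraic (ZMod p) (P.coeff n)) ∧
        Polynomial.eval (algebraMap (Polynomial (ZMod p)) BK Polynomial.X) P = (y : BK)} := by
  have : FaithfulSMul (Polynomial (ZMod p)) BK := .trans (Polynomial (ZMod p)) (RatFunc (ZMod p)) BK
  exact statement5_general hinf hdef
end
end

section
/- Let K be a global function field of characteristic p containing a primitive q-th root of unity, where q ≠ p is prime. Fix z ∈ K^× with z ≠ −1, and let L = K((1+z^{-1})^{1/q}). Then: (a) if 𝔭_K is a prime of K with ord_{𝔭_K} z < 0 and ord_{𝔭_K} z ≢ 0 mod q, then 𝔭_K splits completely in L; in particular, for every prime 𝔭_L of L above 𝔭_K one has ord_{𝔭_L} z < 0 and ord_{𝔭_L} z ≢ 0 mod q; (b) for every prime 𝔱_L of L with ord_{𝔱_L} z ≥ 0, one has ord_{𝔱_L} z ≡ 0 mod q. -/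
noncomputable section

/-!
Let `v` be a prime of `K` with `ord_v z < 0` and `w` a prime of `L` above it. Since `1 + z⁻¹ ≡ 1`
modulo `v`, some multiple of `α = (1 + z⁻¹)^(1/q)` by a `q`-th root of unity is `≡ 1` modulo `w`.
The simplified Newton iteration `x ↦ x + (1 + z⁻¹ - x ^ q) / q` started at `1` stays in `K` and
converges to that multiple, so `K` is `w`-adically dense in `L`, whence `e(w/v) = f(w/v) = 1`. Where
`ord_w z > 0`, the element `z * α ^ q = z + 1` is a unit, so `ord_w z = -q * ord_w α`.

The residue degree is measured by counting, so residue fields must be shown to be finite. A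
uniformizer `t` is transcendental over the finite constant field `F`, and lifting elements of the
residue field that are linearly independent over `F` gives elements of `K` that are linearly
independent over `F(t)`; but `[K : F(t)]` is finite.
-/

section ResidueFieldFinite

open Polynomial IsLocalRing

open scoped IntermediateField.algebraAdjoinAdjoin

theorem linearIndependent_intermediateField_adjoin_iff {F K ι : Type*} [Field F] [Field K]
    [Algebra F K] {S : Set K} {x : ι → K} :
    LinearIndependent (IntermediateField.adjoin F S) x ↔
      LinearIndependent (Algebra.adjoin F S) x :=
  (LinearIndependent.iff_fractionRing _ _).symm

variable {F O : Type*} [Field F] [CommRing O] [IsLocalRing O] [Algebra F O] {t : O}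

theorem residue_aeval_of_mem_maximalIdeal (ht : t ∈ maximalIdeal O) (g : F[X]) :
    residue O (aeval t g) = algebraMap F (ResidueField O) (g.coeff 0) := by
  have ht' : residue O t = 0 := (residue_eq_zero_iff t).2 ht
  rw [← ResidueField.algebraMap_eq, ← aeval_algebraMap_apply, ResidueField.algebraMap_eq, ht',
    coeff_zero_eq_aeval_zero']

variable [IsDomain O] {ι : Type*} {x : ι → O}

-- The constant coefficients vanish by reduction modulo the maximal ideal; then divide by `t`.
theorem eq_zero_of_sum_aeval_mul_eq_zero (ht : t ∈ maximalIdeal O) (ht0 : t ≠ 0)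
    (hx : LinearIndependent F fun i => residue O (x i)) {s : Finset ι} {g : ι → F[X]}
    (hg : ∑ i ∈ s, aeval t (g i) * x i = 0) {i : ι} (hi : i ∈ s) : g i = 0 := by
  have coeff_zero {g : ι → F[X]} (hg : ∑ i ∈ s, aeval t (g i) * x i = 0) :
      ∀ i ∈ s, (g i).coeff 0 = 0 := by
    refine linearIndependent_iff'.1 hx s _ ?_
    simpa [residue_aeval_of_mem_maximalIdeal ht, Algebra.smul_def] using congrArg (residue O) hg
  suffices ∀ n, ∀ g : ι → F[X], ∑ i ∈ s, aeval t (g i) * x i = 0 → (g i).coeff n = 0 from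
    Polynomial.ext fun n => this n g hg
  intro n
  induction n with
  | zero => exact fun g hg => coeff_zero hg i hi
  | succ n ih =>
    intro g hg
    rw [← coeff_divX]
    refine ih (fun i => divX (g i)) (mul_left_cancel₀ ht0 ?_)
    rw [mul_zero, ← hg, Finset.mul_sum]
    refine Finset.sum_congr rfl fun i hi => ?_
    conv_rhs => rw [← X_mul_divX_add (g i), coeff_zero hg i hi]
    simp [mul_assoc]

theorem transcendental_of_mem_maximalIdeal (F : Type*) [Field F] [Algebra F O]
    (ht : t ∈ maximalIdeal O) (ht0 : t ≠ 0) : Transcendental F t := by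
  have hone : LinearIndependent F fun _ : Unit => residue O (1 : O) := by simp
  refine transcendental_iff.2 fun g hg => ?_
  exact eq_zero_of_sum_aeval_mul_eq_zero ht ht0 hone (s := {()}) (g := fun _ => g) (by simpa)
    (Finset.mem_singleton_self ())

variable {K : Type*} [Field K] [Algebra O K] [FaithfulSMul O K] [Algebra F K]
  [IsScalarTower F O K]

theorem linearIndependent_algebraAdjoin_of_residue (ht : t ∈ maximalIdeal O) (ht0 : t ≠ 0)
    (hx : LinearIndependent F fun i => residue O (x i)) :
    LinearIndependent (Algebra.adjoin F {algebraMap O K t}) fun i => algebraMap O K (x i) := by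
  rw [linearIndependent_iff']
  intro s c hc i hi
  have hc_aeval (i : ι) : ∃ g : F[X], aeval (algebraMap O K t) g = c i := by
    simpa [Algebra.adjoin_singleton_eq_range_aeval] using (c i).2
  choose g hg using hc_aeval
  have hsum : ∑ i ∈ s, aeval t (g i) * x i = 0 := by
    apply FaithfulSMul.algebraMap_injective O K
    simpa [← aeval_algebraMap_apply, hg, Algebra.smul_def] using hc
  ext
  simp [← hg, eq_zero_of_sum_aeval_mul_eq_zero ht ht0 hx hsum hi]

theorem finiteDimensional_adjoin_of_transcendental [Algebra.EssFiniteType F K] {t : K}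
    (hK : Algebra.trdeg F K ≤ 1) (ht : Transcendental F t) :
    FiniteDimensional (IntermediateField.adjoin F {t}) K := by
  have hindep : AlgebraicIndependent F fun _ : Unit => t :=
    algebraicIndependent_unique_type_iff.2 ht
  have hbasis : IsTranscendenceBasis F fun _ : Unit => t :=
    hindep.isTranscendenceBasis_of_lift_trdeg_le_of_finite (by simpa using hK)
  have : Algebra.IsAlgebraic (IntermediateField.adjoin F {t}) K := by
    rw [← Set.range_const (ι := Unit)]
    exact hbasis.isAlgebraic_field
  have : Algebra.EssFiniteType (IntermediateField.adjoin F {t}) K :=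
    Algebra.EssFiniteType.of_comp F _ K
  exact Algebra.finite_of_essFiniteType_of_isAlgebraic

theorem finiteDimensional_residueField (F O K : Type*) [Field F] [CommRing O] [IsDomain O]
    [IsLocalRing O] [Algebra F O] [Field K] [Algebra O K] [FaithfulSMul O K] [Algebra F K]
    [IsScalarTower F O K] [Algebra.EssFiniteType F K] (hO : ¬ IsField O)
    (hK : Algebra.trdeg F K ≤ 1) : FiniteDimensional F (ResidueField O) := by
  obtain ⟨t, ht, ht0⟩ := Submodule.exists_mem_ne_zero_of_ne_bot
    (mt isField_iff_maximalIdeal_eq.2 hO)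
  have htK : Transcendental F (algebraMap O K t) :=
    (transcendental_algebraMap_iff (R := F) (FaithfulSMul.algebraMap_injective O K)).2
      (transcendental_of_mem_maximalIdeal F ht ht0)
  have := finiteDimensional_adjoin_of_transcendental hK htK
  let b := Module.Basis.ofVectorSpace F (ResidueField O)
  choose x hx using fun i => residue_surjective (b i)
  have hlift : LinearIndependent (IntermediateField.adjoin F {algebraMap O K t})
      fun i => algebraMap O K (x i) :=
    linearIndependent_intermediateField_adjoin_iff.2 <|
      linearIndependent_algebraAdjoin_of_residue ht ht0
        (by simpa only [hx] using b.linearIndependent)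
  have := hlift.finite
  exact Module.Finite.of_basis b

end ResidueFieldFinite

section FunctionField

variable (F K : Type*) [Field F] [Field K] [Algebra F K] [Algebra (RatFunc F) K]
  [IsScalarTower F (RatFunc F) K] [FiniteDimensional (RatFunc F) K]

open Polynomial

theorem essFiniteType_of_finiteDimensional_ratFunc : Algebra.EssFiniteType F K := by
  have : Algebra.EssFiniteType F[X] (RatFunc F) :=
    Algebra.EssFiniteType.of_isLocalization _ (nonZeroDivisors F[X])
  have : Algebra.EssFiniteType F (RatFunc F) := Algebra.EssFiniteType.comp F F[X] _
  exact Algebra.EssFiniteType.comp F (RatFunc F) K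

theorem trdeg_eq_one_of_finiteDimensional_ratFunc : Algebra.trdeg F K = 1 := by
  have hRat : Algebra.trdeg F (RatFunc F) = 1 := by
    have : Algebra.IsAlgebraic F[X] (RatFunc F) :=
      IsLocalization.isAlgebraic _ (nonZeroDivisors F[X])
    rw [← trdeg_add_eq F F[X], Polynomial.trdeg_of_isDomain, trdeg_eq_zero, add_zero]
  have h := lift_trdeg_add_eq F (RatFunc F) K
  rw [hRat, trdeg_eq_zero] at h
  simpa using h.symm

end FunctionField

theorem withTop_int_one_le_of_pos {a : WithTop ℤ} (ha : 0 < a) : 1 ≤ a := by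
  induction a with
  | top => exact le_top
  | coe n => norm_cast at *

namespace FFPrime

section Basic

variable {K : Type} [Field K] (v : FFPrime K)

/-- The prime `v` as an additive valuation of `K`, giving access to Mathlib's valuation theory. -/
def addVal : AddValuation K (WithTop ℤ) :=
  AddValuation.of v.ord v.ord_zero v.ord_one v.ord_add v.ord_mul

variable {v}

theorem ord_pow (x : K) (n : ℕ) : v.ord (x ^ n) = n • v.ord x :=
  v.addVal.map_pow x n

theorem ord_sub_comm (x y : K) : v.ord (x - y) = v.ord (y - x) :=
  v.addVal.map_sub_swap x y

theorem le_ord_add {a : WithTop ℤ} {x y : K} (hx : a ≤ v.ord x) (hy : a ≤ v.ord y) :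
    a ≤ v.ord (x + y) :=
  v.addVal.map_le_add hx hy

theorem le_ord_sub {a : WithTop ℤ} {x y : K} (hx : a ≤ v.ord x) (hy : a ≤ v.ord y) :
    a ≤ v.ord (x - y) :=
  (le_min hx hy).trans (v.addVal.map_sub x y)

theorem ord_add_pos {x y : K} (hx : 0 < v.ord x) (hy : 0 < v.ord y) : 0 < v.ord (x + y) :=
  v.addVal.map_lt_add hx hy

theorem exists_int_ord_eq {x : K} (hx : x ≠ 0) : ∃ n : ℤ, v.ord x = n :=
  WithTop.ne_top_iff_exists.1 (v.ord_ne_top x hx) |>.imp fun _ => Eq.symm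

theorem ord_inv_pos {x : K} (hx : v.ord x < 0) : 0 < v.ord x⁻¹ := by
  have hx0 : x ≠ 0 := by
    rintro rfl
    simp [v.ord_zero] at hx
  obtain ⟨n, hn⟩ := v.exists_int_ord_eq hx0
  obtain ⟨m, hm⟩ := v.exists_int_ord_eq (inv_ne_zero hx0)
  have hmn := v.ord_mul x x⁻¹
  rw [mul_inv_cancel₀ hx0, v.ord_one, hn, hm] at hmn
  rw [hn] at hx
  rw [hm]
  norm_cast at *
  omega

theorem ord_eq_zero_of_pow_eq_zero {x : K} {n : ℕ} (hn : n ≠ 0) (h : v.ord (x ^ n) = 0) :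
    v.ord x = 0 := by
  have hx : x ≠ 0 := by
    rintro rfl
    simp [zero_pow hn, v.ord_zero] at h
  obtain ⟨m, hm⟩ := v.exists_int_ord_eq hx
  rw [ord_pow, hm] at h
  rw [hm]
  norm_cast at *
  simpa [hn] using h

theorem ord_eq_of_lt_ord_sub {x y : K} (h : v.ord x < v.ord (x - y)) : v.ord y = v.ord x :=
  v.addVal.map_eq_of_lt_sub (h.trans_eq (ord_sub_comm x y))

theorem ord_eq_zero_of_ord_sub_one_pos {x : K} (hx : 0 < v.ord (x - 1)) : v.ord x = 0 := by
  rw [← v.ord_one]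
  apply ord_eq_of_lt_ord_sub
  rwa [v.ord_one, ord_sub_comm]

end Basic

section LiesOver

variable {K M : Type} [Field K] [Field M] {v : FFPrime K} {w : FFPrime M} {φ : K →+* M}

theorem LiesOver.ord_eq_zero (hw : w.LiesOver v φ) {x : K} (hx : v.ord x = 0) :
    w.ord (φ x) = 0 := by
  obtain ⟨e, -, hord⟩ := hw
  rw [hord, hx, mul_zero]

theorem LiesOver.ord_pos (hw : w.LiesOver v φ) {x : K} (hx : 0 < v.ord x) :
    0 < w.ord (φ x) := by
  obtain ⟨e, he, hord⟩ := hw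
  rw [hord]
  generalize v.ord x = a at hx
  induction a with
  | top => simp [he.ne']
  | coe n =>
    norm_cast at *
    positivity

end LiesOver

section ResidueField

open IsLocalRing

variable {K : Type} [Field K] (v : FFPrime K)

/-- The valuation ring `{x | 0 ≤ ord x}` of `v`. -/
def valuationRing : ValuationSubring K :=
  v.addVal.toValuation.valuationSubring

variable {v}

theorem mem_maximalIdeal_valuationRing {x : v.valuationRing} :
    x ∈ maximalIdeal v.valuationRing ↔ 0 < v.ord x :=
  v.addVal.toValuation.mem_maximalIdeal_iff K

theorem residue_eq_residue_iff {x y : v.valuationRing} :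
    residue v.valuationRing x = residue v.valuationRing y ↔ 0 < v.ord (x - y) := by
  rw [← sub_eq_zero, ← map_sub, residue_eq_zero_iff, mem_maximalIdeal_valuationRing]
  rfl

theorem not_isField_valuationRing : ¬ IsField v.valuationRing := by
  obtain ⟨t, ht⟩ := v.ord_surj 1
  have htpos : 0 < v.ord t := by simp [ht]
  have ht0 : t ≠ 0 := by
    rintro rfl
    simp [v.ord_zero] at ht
  rw [isField_iff_maximalIdeal_eq]
  refine Submodule.ne_bot_iff _ |>.2 ⟨⟨t, htpos.le⟩, mem_maximalIdeal_valuationRing.2 htpos, ?_⟩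
  exact Subtype.coe_ne_coe.1 ht0

theorem HasResidueCard.natCard_residueField {n : ℕ} (h : v.HasResidueCard n) :
    Nat.card (ResidueField v.valuationRing) = n := by
  obtain ⟨s, rfl, hnonneg, hinj, hsurj⟩ := h
  let toResidue (x : s) : ResidueField v.valuationRing :=
    residue v.valuationRing ⟨x, hnonneg x x.2⟩
  have hbij : Function.Bijective toResidue := by
    refine ⟨fun x y hxy => ?_, fun a => ?_⟩
    · by_contra hne
      exact hinj x x.2 y y.2 (Subtype.coe_ne_coe.2 hne) (residue_eq_residue_iff.1 hxy)
    · obtain ⟨z, rfl⟩ := residue_surjective a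
      obtain ⟨x, hx, hzx⟩ := hsurj z z.2
      exact ⟨⟨x, hx⟩, (residue_eq_residue_iff.2 hzx).symm⟩
  rw [← Nat.card_eq_of_bijective _ hbij, Nat.card_eq_fintype_card, Fintype.card_coe]

theorem hasResidueCard_natCard [Finite (ResidueField v.valuationRing)] :
    v.HasResidueCard (Nat.card (ResidueField v.valuationRing)) := by
  classical
  have := Fintype.ofFinite (ResidueField v.valuationRing)
  obtain ⟨lift, hlift⟩ := (residue_surjective (R := v.valuationRing)).hasRightInverse
  have hinj : Function.Injective fun a => (lift a : K) :=
    Subtype.val_injective.comp hlift.injective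
  refine ⟨Finset.univ.image fun a => (lift a : K), ?_, ?_, ?_, ?_⟩
  · rw [Finset.card_image_of_injective _ hinj, Finset.card_univ, Nat.card_eq_fintype_card]
  · exact Finset.forall_mem_image.2 fun a _ => (lift a).2
  · refine Finset.forall_mem_image.2 fun a _ => Finset.forall_mem_image.2 fun b _ hne hpos => hne ?_
    have hab := residue_eq_residue_iff.2 hpos
    rw [hlift, hlift] at hab
    rw [hab]
  · intro z hz
    exact Finset.exists_mem_image.2 ⟨residue _ ⟨z, hz⟩, Finset.mem_univ _,
      (residue_eq_residue_iff (x := ⟨z, hz⟩)).1 (hlift _).symm⟩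

end ResidueField

section Density

variable {K M : Type} [Field K] [Field M] [Algebra K M] {w : FFPrime M}

theorem exists_forall_le_ord_mul (w : FFPrime M) (m : M) (N : ℤ) :
    ∃ N' : ℤ, ∀ d, (N' : WithTop ℤ) ≤ w.ord d → (N : WithTop ℤ) ≤ w.ord (m * d) := by
  rcases eq_or_ne m 0 with rfl | hm
  · exact ⟨0, fun d _ => by simp [w.ord_zero]⟩
  · obtain ⟨a, ha⟩ := w.exists_int_ord_eq hm
    refine ⟨N - a, fun d hd => ?_⟩
    calc (N : WithTop ℤ) = a + (N - a : ℤ) := by norm_cast; omega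
      _ ≤ w.ord m + w.ord d := by rw [ha]; gcongr
      _ = w.ord (m * d) := (w.ord_mul m d).symm

variable (K w) in
/-- The closure of `K` in `M` for the `w`-adic topology: the elements of `M` that are approximated
by elements of `K` to every `w`-adic precision. -/
def adicClosure : Subalgebra K M where
  carrier := {m | ∀ N : ℤ, ∃ k : K, (N : WithTop ℤ) ≤ w.ord (m - algebraMap K M k)}
  algebraMap_mem' k N := ⟨k, by simp [w.ord_zero]⟩
  add_mem' {a b} ha hb N := by
    obtain ⟨k, hk⟩ := ha N
    obtain ⟨l, hl⟩ := hb N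
    refine ⟨k + l, ?_⟩
    rw [map_add, add_sub_add_comm]
    exact le_ord_add hk hl
  mul_mem' {a b} ha hb N := by
    obtain ⟨A, hA⟩ := w.exists_forall_le_ord_mul a N
    obtain ⟨l, hl⟩ := hb A
    obtain ⟨B, hB⟩ := w.exists_forall_le_ord_mul (algebraMap K M l) N
    obtain ⟨k, hk⟩ := ha B
    refine ⟨k * l, ?_⟩
    have hsplit : a * b - algebraMap K M (k * l) =
        a * (b - algebraMap K M l) + algebraMap K M l * (a - algebraMap K M k) := by
      rw [map_mul]
      ring
    rw [hsplit]
    exact le_ord_add (hA _ hl) (hB _ hk)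

theorem mem_adicClosure {m : M} :
    m ∈ adicClosure K w ↔ ∀ N : ℤ, ∃ k : K, (N : WithTop ℤ) ≤ w.ord (m - algebraMap K M k) :=
  Iff.rfl

theorem exists_lt_ord_sub_algebraMap (h : adicClosure K w = ⊤) (m : M) (N : ℤ) :
    ∃ k : K, (N : WithTop ℤ) < w.ord (m - algebraMap K M k) := by
  obtain ⟨k, hk⟩ := mem_adicClosure.1 (h ▸ Algebra.mem_top : m ∈ adicClosure K w) (N + 1)
  exact ⟨k, lt_of_lt_of_le (by norm_cast; omega) hk⟩

variable {v : FFPrime K}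

theorem LiesOverWith.eq_one_of_adicClosure_eq_top {e : ℕ}
    (hw : w.LiesOverWith v (algebraMap K M) e) (h : adicClosure K w = ⊤) : e = 1 := by
  obtain ⟨π, hπ⟩ := w.ord_surj 1
  obtain ⟨k, hk⟩ := exists_lt_ord_sub_algebraMap h π 1
  have hek : (e : ℤ) * v.ord k = 1 := by
    rw [← hw.2, ord_eq_of_lt_ord_sub (hπ.trans_lt hk), hπ]
    rfl
  have hk0 : k ≠ 0 := by
    rintro rfl
    simp [v.ord_zero, hw.1.ne'] at hek
  obtain ⟨n, hn⟩ := v.exists_int_ord_eq hk0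
  rw [hn] at hek
  norm_cast at hek
  simpa using Int.eq_one_or_neg_one_of_mul_eq_one hek

theorem LiesOver.ramIdx_eq_one (hw : w.LiesOver v (algebraMap K M)) (h : adicClosure K w = ⊤) :
    w.ramIdx v (algebraMap K M) = 1 := by
  have hex : ∃ e, w.LiesOverWith v (algebraMap K M) e := hw
  rw [ramIdx, dif_pos hex]
  exact hex.choose_spec.eq_one_of_adicClosure_eq_top h

theorem LiesOver.ord_algebraMap (hw : w.LiesOver v (algebraMap K M))
    (h : adicClosure K w = ⊤) (x : K) : w.ord (algebraMap K M x) = v.ord x := by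
  obtain ⟨e, he⟩ := hw
  obtain rfl := he.eq_one_of_adicClosure_eq_top h
  simpa using he.2 x

theorem HasResidueCard.of_adicClosure_eq_top {n : ℕ} (hn : v.HasResidueCard n)
    (hw : w.LiesOver v (algebraMap K M)) (h : adicClosure K w = ⊤) :
    w.HasResidueCard n := by
  have hord := hw.ord_algebraMap h
  obtain ⟨s, hcard, hnonneg, hinj, hsurj⟩ := hn
  refine ⟨s.map ⟨algebraMap K M, (algebraMap K M).injective⟩, by rwa [Finset.card_map], ?_, ?_, ?_⟩
  · simpa [hord] using hnonneg
  · simpa [← map_sub, hord] using hinj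
  · intro m hm
    obtain ⟨k, hk⟩ := exists_lt_ord_sub_algebraMap h m 0
    have hk0 : 0 ≤ v.ord k := by
      rw [← hord, ← sub_sub_cancel m (algebraMap K M k)]
      exact le_ord_sub hm hk.le
    obtain ⟨x, hx, hkx⟩ := hsurj k hk0
    refine ⟨algebraMap K M x, Finset.mem_map_of_mem _ hx, ?_⟩
    rw [← sub_add_sub_cancel m (algebraMap K M k), ← map_sub]
    exact ord_add_pos hk ((hord _).symm ▸ hkx)

theorem LiesOver.resDeg_eq_one [Finite (IsLocalRing.ResidueField v.valuationRing)]
    (hw : w.LiesOver v (algebraMap K M)) (h : adicClosure K w = ⊤) : w.resDeg v = 1 := by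
  have hv := v.hasResidueCard_natCard
  have hex : ∃ f : ℕ, 0 < f ∧ ∃ m n : ℕ, 1 < m ∧ v.HasResidueCard m ∧
      w.HasResidueCard n ∧ n = m ^ f :=
    ⟨1, one_pos, _, _, Finite.one_lt_card, hv, hv.of_adicClosure_eq_top hw h, (pow_one _).symm⟩
  rw [resDeg, dif_pos hex]
  obtain ⟨-, m, n, hm, hvm, hwn, hpow⟩ := hex.choose_spec
  have hmn : n = m :=
    hwn.natCard_residueField.symm.trans (hvm.of_adicClosure_eq_top hw h).natCard_residueField
  exact (Nat.pow_eq_self_iff hm).1 (hpow.symm.trans hmn)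

end Density

section Kummer

open IsLocalRing Finset

variable {K M : Type} [Field K] [Field M]

theorem ord_geom_sum₂_sub_natCast_pos {w : FFPrime M} {x y : M} (hx : 0 < w.ord (x - 1))
    (hy : 0 < w.ord (y - 1)) (q : ℕ) :
    0 < w.ord (∑ i ∈ range q, x ^ i * y ^ (q - 1 - i) - q) := by
  lift x to w.valuationRing using (ord_eq_zero_of_ord_sub_one_pos hx).ge
  lift y to w.valuationRing using (ord_eq_zero_of_ord_sub_one_pos hy).ge
  have hx1 : residue _ x = 1 := (residue_eq_residue_iff (y := 1)).2 hx
  have hy1 : residue _ y = 1 := (residue_eq_residue_iff (y := 1)).2 hy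
  have hsum : residue _ (∑ i ∈ range q, x ^ i * y ^ (q - 1 - i)) =
      residue _ (q : w.valuationRing) := by
    simp [hx1, hy1]
  simpa using residue_eq_residue_iff.1 hsum

theorem ord_sub_add_one_le_newton {w : FFPrime M} {q : ℕ} (hq : w.ord (q : M) = 0) {β y : M}
    (hβ : 0 < w.ord (β - 1)) (hy : 0 < w.ord (y - 1)) :
    w.ord (β - y) + 1 ≤ w.ord (β - (y + (β ^ q - y ^ q) / q)) := by
  have hq0 : (q : M) ≠ 0 := by
    intro h
    simp [h, w.ord_zero] at hq
  set S := ∑ i ∈ range q, β ^ i * y ^ (q - 1 - i)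
  have hstep : (q : M) * (β - (y + (β ^ q - y ^ q) / q)) = (β - y) * (q - S) := by
    rw [← geom_sum₂_mul]
    field_simp
    ring
  calc w.ord (β - y) + 1 ≤ w.ord (β - y) + w.ord (q - S) := by
        gcongr
        exact withTop_int_one_le_of_pos (ord_sub_comm S _ ▸ ord_geom_sum₂_sub_natCast_pos hβ hy q)
    _ = w.ord (q : M) + w.ord (β - (y + (β ^ q - y ^ q) / q)) := by
        rw [← w.ord_mul, ← w.ord_mul, hstep]
    _ = w.ord (β - (y + (β ^ q - y ^ q) / q)) := by rw [hq, zero_add]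

theorem exists_ord_sub_pow_pos {w : FFPrime M} {q : ℕ} [NeZero q] {ζ α : M}
    (hζ : IsPrimitiveRoot ζ q) (hα : 0 < w.ord (α ^ q - 1)) :
    ∃ i, 0 < w.ord (α - ζ ^ i) := by
  by_contra! hnonpos
  have hprod : α ^ q - 1 = ∏ μ ∈ Polynomial.nthRootsFinset q (1 : M), (α - μ) := by
    simpa using hζ.pow_sub_pow_eq_prod_sub_mul α 1 (NeZero.pos q)
  refine hα.not_ge ?_
  rw [hprod]
  refine prod_induction _ (fun x => w.ord x ≤ 0) (fun x y hx hy => ?_) w.ord_one.le fun μ hμ => ?_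
  · exact (w.ord_mul x y).trans_le (add_nonpos hx hy)
  · obtain ⟨i, -, rfl⟩ :=
      hζ.eq_pow_of_pow_eq_one ((Polynomial.mem_nthRootsFinset (NeZero.pos q) 1).1 hμ)
    exact hnonpos i

variable [Algebra K M] {w : FFPrime M} {q : ℕ}

theorem mem_adicClosure_of_pow_eq (hq : w.ord (q : M) = 0) {β : M} {c : K}
    (hβ : β ^ q = algebraMap K M c) (hβ1 : 0 < w.ord (β - 1)) : β ∈ adicClosure K w := by
  have approx (n : ℕ) : ∃ x : K, ((n + 1 : ℤ) : WithTop ℤ) ≤ w.ord (β - algebraMap K M x) := by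
    induction n with
    | zero => exact ⟨1, by simpa using withTop_int_one_le_of_pos hβ1⟩
    | succ n ih =>
      obtain ⟨x, hx⟩ := ih
      have hx1 : 0 < w.ord (algebraMap K M x - 1) := by
        have hβx : 0 < w.ord (β - algebraMap K M x) := lt_of_lt_of_le (by norm_cast; omega) hx
        rw [← sub_add_sub_cancel _ β]
        exact ord_add_pos (ord_sub_comm β _ ▸ hβx) hβ1
      refine ⟨x + (c - x ^ q) / q, ?_⟩
      calc ((n + 1 : ℕ) + 1 : ℤ) ≤ w.ord (β - algebraMap K M x) + 1 := by
            push_cast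
            gcongr
            exact_mod_cast hx
        _ ≤ w.ord (β - algebraMap K M (x + (c - x ^ q) / q)) := by
            simpa [hβ] using ord_sub_add_one_le_newton hq hβ1 hx1
  intro N
  obtain ⟨x, hx⟩ := approx N.toNat
  exact ⟨x, le_trans (by norm_cast; omega) hx⟩

theorem mem_adicClosure_of_pow_eq_of_isPrimitiveRoot (hq : w.ord (q : M) = 0) {ζ : K}
    (hζ : IsPrimitiveRoot ζ q) {α : M} {c : K} (hα : α ^ q = algebraMap K M c)
    (hc : 0 < w.ord (algebraMap K M c - 1)) : α ∈ adicClosure K w := by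
  have : NeZero q := ⟨by rintro rfl; simp [w.ord_zero] at hq⟩
  obtain ⟨i, hi⟩ := exists_ord_sub_pow_pos (hζ.map_of_injective (algebraMap K M).injective)
    (hα ▸ hc)
  set μ : M := algebraMap K M ζ ^ i
  have hμq : μ ^ q = 1 := by
    rw [← pow_mul, mul_comm, pow_mul, ← map_pow, hζ.pow_eq_one, map_one, one_pow]
  have hμ0 : μ ≠ 0 := by
    rintro h
    simp [h, NeZero.ne q] at hμq
  have hμ : w.ord μ = 0 := ord_eq_zero_of_pow_eq_zero (NeZero.ne q) (hμq ▸ w.ord_one)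
  have hβq : (α / μ) ^ q = algebraMap K M c := by rw [div_pow, hμq, div_one, hα]
  have hβ1 : 0 < w.ord (α / μ - 1) := by
    have hmul : α - μ = μ * (α / μ - 1) := by field_simp
    rwa [hmul, w.ord_mul, hμ, zero_add] at hi
  rw [← div_mul_cancel₀ α hμ0]
  exact mul_mem (mem_adicClosure_of_pow_eq hq hβq hβ1)
    (pow_mem (Subalgebra.algebraMap_mem _ ζ) i)

theorem adicClosure_eq_top_of_pow_eq (hq : w.ord (q : M) = 0) {ζ : K}
    (hζ : IsPrimitiveRoot ζ q) {α : M} {c : K} (hα : α ^ q = algebraMap K M c)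
    (hc : 0 < w.ord (algebraMap K M c - 1))
    (hgen : IntermediateField.adjoin K {α} = ⊤) : adicClosure K w = ⊤ := by
  have hq0 : q ≠ 0 := by rintro rfl; simp [w.ord_zero] at hq
  have hint : IsIntegral K α := .of_pow hq0.bot_lt (hα ▸ isIntegral_algebraMap)
  rw [eq_top_iff, ← IntermediateField.top_toSubalgebra, ← hgen,
    IntermediateField.adjoin_simple_toSubalgebra_of_isAlgebraic hint.isAlgebraic,
    Algebra.adjoin_le_iff, Set.singleton_subset_iff]
  exact mem_adicClosure_of_pow_eq_of_isPrimitiveRoot hq hζ hα hc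

theorem LiesOver.adicClosure_eq_top {v : FFPrime K} (hw : w.LiesOver v (algebraMap K M))
    (hq : v.ord (q : K) = 0) {ζ : K} (hζ : IsPrimitiveRoot ζ q) {α : M}
    {c : K} (hα : α ^ q = algebraMap K M c) (hc : 0 < v.ord (c - 1))
    (hgen : IntermediateField.adjoin K {α} = ⊤) : adicClosure K w = ⊤ := by
  refine adicClosure_eq_top_of_pow_eq (q := q) ?_ hζ hα ?_ hgen
  · simpa using hw.ord_eq_zero hq
  · simpa using hw.ord_pos hc

theorem ordDvd_of_pow_eq_one_add_inv (hq : q ≠ 0) {z α : M} (hz : z ≠ 0)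
    (hα : α ^ q = 1 + z⁻¹) (hord : 0 ≤ w.ord z) : w.OrdDvd q z := by
  rcases hord.eq_or_lt with hzero | hpos
  · exact ⟨0, by simp [← hzero]⟩
  have hprod : z * α ^ q - 1 = z := by
    rw [hα, mul_add, mul_inv_cancel₀ hz]
    ring
  have hunit : w.ord (z * α ^ q) = 0 := ord_eq_zero_of_ord_sub_one_pos (by rwa [hprod])
  have hα0 : α ≠ 0 := by
    rintro rfl
    simp [w.ord_zero, hq] at hunit
  obtain ⟨n, hn⟩ := w.exists_int_ord_eq hz
  obtain ⟨a, ha⟩ := w.exists_int_ord_eq hα0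
  refine ⟨-a, ?_⟩
  rw [w.ord_mul, ord_pow, hn, ha] at hunit
  rw [hn]
  norm_cast at *
  rw [nsmul_eq_mul] at hunit
  linear_combination hunit

end Kummer

section FunctionField

open IsLocalRing

variable {F K : Type} [Field F] [Finite F] [Field K]

theorem ord_map_eq_zero_of_finite (v : FFPrime K) (φ : F →+* K) {a : F} (ha : a ≠ 0) :
    v.ord (φ a) = 0 := by
  have := Fintype.ofFinite F
  refine ord_eq_zero_of_pow_eq_zero (n := Fintype.card F - 1)
    (Nat.sub_ne_zero_of_lt Fintype.one_lt_card) ?_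
  rw [← map_pow, FiniteField.pow_card_sub_one_eq_one a ha, map_one, v.ord_one]

theorem map_mem_valuationRing_of_finite (v : FFPrime K) (φ : F →+* K) (a : F) :
    φ a ∈ v.valuationRing := by
  rcases eq_or_ne a 0 with rfl | ha
  · rw [map_zero]
    exact zero_mem _
  · exact (v.ord_map_eq_zero_of_finite φ ha).ge

theorem finite_residueField (F : Type) [Field F] [Finite F] [Algebra (RatFunc F) K]
    [FiniteDimensional (RatFunc F) K] (v : FFPrime K) :
    Finite (ResidueField v.valuationRing) := by
  let φ : F →+* K := (algebraMap (RatFunc F) K).comp (algebraMap F (RatFunc F))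
  let _ : Algebra F K := φ.toAlgebra
  let _ : Algebra F v.valuationRing :=
    (φ.codRestrict v.valuationRing (v.map_mem_valuationRing_of_finite φ)).toAlgebra
  have : IsScalarTower F (RatFunc F) K := .of_algebraMap_eq fun _ => rfl
  have : IsScalarTower F v.valuationRing K := .of_algebraMap_eq fun _ => rfl
  have := essFiniteType_of_finiteDimensional_ratFunc F K
  have := finiteDimensional_residueField F v.valuationRing K not_isField_valuationRing
    (trdeg_eq_one_of_finiteDimensional_ratFunc F K).le
  exact Module.finite_of_finite F

theorem ord_natCast_eq_zero_of_finite (v : FFPrime K) (φ : F →+* K) {n : ℕ}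
    (hn : (n : K) ≠ 0) : v.ord (n : K) = 0 := by
  rw [← map_natCast φ] at hn ⊢
  exact v.ord_map_eq_zero_of_finite φ ((map_ne_zero φ).1 hn)

end FunctionField

end FFPrime

theorem statement15_general (F K M : Type) [Field F] [Finite F] [Field K] [Field M]
    [Algebra (RatFunc F) K] [FiniteDimensional (RatFunc F) K] [Algebra K M] {q : ℕ} (hq : q ≠ 0)
    {ζ : K} (hζ : IsPrimitiveRoot ζ q) {z : K} (hz : z ≠ 0) {α : M}
    (hα : α ^ q = algebraMap K M (1 + z⁻¹)) (hgen : IntermediateField.adjoin K {α} = ⊤) :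
    (∀ v : FFPrime K, v.ord z < 0 →
      v.SplitsCompletely (algebraMap K M) ∧
      ∀ w : FFPrime M, w.LiesOver v (algebraMap K M) →
        ∀ x : K, w.ord (algebraMap K M x) = v.ord x) ∧
    (∀ w : FFPrime M, 0 ≤ w.ord (algebraMap K M z) → w.OrdDvd q (algebraMap K M z)) := by
  refine ⟨fun v hv => ?_, fun w hw => ?_⟩
  · have : NeZero q := ⟨hq⟩
    have hvq : v.ord (q : K) = 0 := v.ord_natCast_eq_zero_of_finite
      ((algebraMap (RatFunc F) K).comp (algebraMap F (RatFunc F))) hζ.neZero'.ne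
    have hc : 0 < v.ord (1 + z⁻¹ - 1) := by simpa using FFPrime.ord_inv_pos hv
    have hdense (w : FFPrime M) (hw : w.LiesOver v (algebraMap K M)) :
        FFPrime.adicClosure K w = ⊤ :=
      hw.adicClosure_eq_top hvq hζ hα hc hgen
    have := v.finite_residueField F
    exact ⟨fun w hw => ⟨hw.ramIdx_eq_one (hdense w hw), hw.resDeg_eq_one (hdense w hw)⟩,
      fun w hw => hw.ord_algebraMap (hdense w hw)⟩
  · exact FFPrime.ordDvd_of_pow_eq_one_add_inv hq ((map_ne_zero _).2 hz) (by simpa using hα) hw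

/-- Behavior of primes in `L = K((1+z⁻¹)^{1/q})` for `z ∈ K^×`,
`z ≠ -1`: (a) any prime `𝔭` of `K` with `ord_𝔭 z < 0` and `ord_𝔭 z ≢ 0 mod q` splits
completely, and the same order conditions hold at every prime above it; (b) at every
prime of `L` where `z` has nonnegative order, the order of `z` is `≡ 0 mod q`. -/
theorem statement15 (p q : ℕ) [Fact p.Prime] (hq : q.Prime) (hqp : q ≠ p)
    (K : Type) [Field K] [Algebra (RatFunc (ZMod p)) K]
    [FiniteDimensional (RatFunc (ZMod p)) K]
    (ζ : K) (hζ : IsPrimitiveRoot ζ q)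
    (z : K) (hz : z ≠ 0) (hz1 : z ≠ -1)
    (M : Type) [Field M] [Algebra K M] (α : M)
    (hα : α ^ q = algebraMap K M (1 + z⁻¹))
    (hgen : IntermediateField.adjoin K {α} = ⊤) :
    (∀ v : FFPrime K, v.ord z < 0 → ¬ v.OrdDvd q z →
      v.SplitsCompletely (algebraMap K M) ∧
      ∀ w : FFPrime M, w.LiesOver v (algebraMap K M) →
        w.ord (algebraMap K M z) < 0 ∧ ¬ w.OrdDvd q (algebraMap K M z)) ∧
    (∀ w : FFPrime M, 0 ≤ w.ord (algebraMap K M z) → w.OrdDvd q (algebraMap K M z)) := by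
  have ⟨ha, hb⟩ := statement15_general (ZMod p) K M hq.ne_zero hζ hz hα hgen
  exact ⟨fun v hv hdvd => ⟨(ha v hv).1, fun w hw => by
    simpa only [FFPrime.OrdDvd, (ha v hv).2 w hw] using ⟨hv, hdvd⟩⟩, hb⟩
end
end

section
/- Let K be a finite extension of 𝔽_p(t), let 𝐊/K be a Galois algebraic (possibly infinite) extension, let q be a prime different from p, and let 𝔭_K be a prime of K. Suppose 𝐊 is q-bounded at 𝔭_K, i.e. for every prime 𝔭_𝐊 of 𝐊 lying over 𝔭_K there exists B ∈ ℕ such that for every finite extension L of K inside 𝐊, the q-adic valuations of e(𝔭_𝐊 ∩ L / 𝔭_K) and of f(𝔭_𝐊 ∩ L / 𝔭_K) are at most B. Then 𝔭_K is uniformly q-bounded in 𝐊: there exists a single B ∈ ℕ such that for every finite extension K̂ of K inside 𝐊 and every prime 𝔭_{K̂} of K̂ lying over 𝔭_K, the q-adic valuations of e(𝔭_{K̂}/𝔭_K) and of f(𝔭_{K̂}/𝔭_K) are at most B. -/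
noncomputable section

/-
Fix one valuation `V` of the big field over `v`, and let `C` be its bound. The valuation ring of a
prime `w` over `v` of a finite subextension `F` extends to a valuation ring of the big field, and
this one is conjugate over `K` to the ring of `V`: the Galois group permutes transitively the primes
of the integral closure of the valuation ring of `v`, and a valuation ring of an algebraic extension
is determined by its center there. So `w` corresponds, under an automorphism, to the prime below `V`
of a conjugate of `F`, which has the same ramification index and residue degree, and `C` bounds them
for every `w`. Such a `V` with values in `ℚ` exists because the value group of an algebraic
extension is torsion over that of the base field.
-/

open Polynomial

section ValuationSubring

variable {K B : Type*} [Field K] [Field B]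

theorem mem_nonunits_comap_iff (φ : K →+* B) (W : ValuationSubring B) {x : K} :
    x ∈ (W.comap φ).nonunits ↔ φ x ∈ W.nonunits := by
  simp [ValuationSubring.mem_nonunits_iff_or]

theorem exists_valuationSubring_comap_eq (φ : K →+* B) (R : ValuationSubring K) :
    ∃ W : ValuationSubring B, W.comap φ = R := by
  obtain ⟨W, hW, hlocal⟩ := IsLocalRing.exists_factor_valuationRing (φ.comp R.subtype)
  refine ⟨W, le_antisymm ?_ fun x hx => hW ⟨x, hx⟩⟩
  rw [← ValuationSubring.nonunits_le_nonunits]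
  intro x hx
  lift x to R using ValuationSubring.nonunits_subset hx
  rw [mem_nonunits_comap_iff]
  refine (ValuationSubring.coe_mem_nonunits_iff (a := (⟨φ x, hW x⟩ : W))).2 fun hunit => ?_
  exact ValuationSubring.coe_mem_nonunits_iff.1 hx (hlocal.map_nonunit x hunit)

theorem isIntegral_of_forall_mem_valuationSubring {R : Type*} [CommRing R] [Algebra R B] {y : B}
    (hy : ∀ V : ValuationSubring B, (∀ r : R, algebraMap R B r ∈ V) → y ∈ V) :
    IsIntegral R y := by
  by_contra hnot
  obtain ⟨V, hV, hyV⟩ := Subring.exists_le_valuationSubring_of_isIntegrallyClosedIn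
    (R := (integralClosure R B).toSubring) hnot
  exact hyV (hy V fun r => hV ((integralClosure R B).algebraMap_mem r))

theorem mem_valuationSubring_of_isIntegral {R : Type*} [CommRing R] [Algebra R B]
    {W : ValuationSubring B} (hW : ∀ r : R, algebraMap R B r ∈ W) {y : B} (hy : IsIntegral R y) :
    y ∈ W := by
  obtain ⟨P, hmonic, hroot⟩ := hy
  have hint : IsIntegral W y := by
    let f : R →+* W := (algebraMap R B).codRestrict W.toSubring hW
    refine ⟨P.map f, hmonic.map f, ?_⟩
    rw [eval₂_map]
    exact hroot
  obtain ⟨z, rfl⟩ := IsIntegrallyClosed.algebraMap_eq_of_integral hint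
  exact z.2

end ValuationSubring

section Denominators

variable {R B : Type*} [CommRing R] [Field B] [Algebra R B]

theorem coeff_iterate_divX (P : R[X]) (i j : ℕ) : (divX^[i] P).coeff j = P.coeff (j + i) := by
  induction i generalizing j with
  | zero => rfl
  | succ i ih => rw [Function.iterate_succ_apply', coeff_divX, ih, add_assoc, add_comm 1]

theorem aeval_iterate_divX (P : R[X]) (x : B) (i : ℕ) :
    aeval x (divX^[i] P) = aeval x (divX^[i + 1] P) * x + algebraMap R B (P.coeff i) := by
  conv_lhs => rw [← divX_mul_X_add (divX^[i] P)]
  simp [Function.iterate_succ_apply', coeff_iterate_divX]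

theorem aeval_mem_valuationSubring {V : ValuationSubring B} (hV : ∀ r : R, algebraMap R B r ∈ V)
    {x : B} (hx : x ∈ V) (P : R[X]) : aeval x P ∈ V := by
  rw [aeval_eq_sum_range]
  exact sum_mem fun i _ => by
    rw [Algebra.smul_def]
    exact mul_mem (hV _) (pow_mem hx i)

-- An element lying in every valuation ring over `R` is integral, and the `i`-th value is a
-- polynomial in `x` if `x ∈ V` and a polynomial in `x⁻¹` otherwise.
theorem isIntegral_aeval_iterate_divX {P : R[X]} {x : B} (hroot : aeval x P = 0) (i : ℕ) :
    IsIntegral R (aeval x (divX^[i] P)) := by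
  refine isIntegral_of_forall_mem_valuationSubring fun V hV => ?_
  by_cases hx : x ∈ V
  · exact aeval_mem_valuationSubring hV hx _
  · have hx0 : x ≠ 0 := fun h => hx (h ▸ V.zero_mem)
    have hinv : x⁻¹ ∈ V := (V.mem_or_inv_mem x).resolve_left hx
    induction i with
    | zero => simp [hroot]
    | succ i ih =>
      have hdiv : aeval x (divX^[i + 1] P) =
          (aeval x (divX^[i] P) - algebraMap R B (P.coeff i)) * x⁻¹ := by
        rw [aeval_iterate_divX P x i, add_sub_cancel_right, mul_inv_cancel_right₀ hx0]
      rw [hdiv]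
      exact mul_mem (sub_mem ih (hV _)) hinv

theorem isIntegral_aeval_iterate_divX_mul {P : R[X]} {x : B} (hroot : aeval x P = 0) (i : ℕ) :
    IsIntegral R (aeval x (divX^[i] P) * x) := by
  cases i with
  | zero => simpa [hroot] using isIntegral_zero
  | succ i =>
    rw [← add_sub_cancel_right (_ * x) (algebraMap R B (P.coeff i)), ← aeval_iterate_divX]
    exact (isIntegral_aeval_iterate_divX hroot i).sub isIntegral_algebraMap

theorem exists_dvd_coeff [IsDomain R] [ValuationRing R] {P : R[X]} (hP : P ≠ 0) :
    ∃ i ∈ P.support, ∀ j, P.coeff i ∣ P.coeff j := by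
  classical
  obtain ⟨i, hi, hmax⟩ := P.support.exists_max_image (fun i => Ideal.span {P.coeff i})
    (support_nonempty.2 hP)
  refine ⟨i, hi, fun j => ?_⟩
  by_cases hj : j ∈ P.support
  · exact Ideal.span_singleton_le_span_singleton.1 (hmax j hj)
  · simp [notMem_support_iff.1 hj]

theorem exists_aeval_eq_zero_coeff_eq_one [IsDomain R] [ValuationRing R] [FaithfulSMul R B]
    {x : B} (hx : IsAlgebraic R x) : ∃ P : R[X], aeval x P = 0 ∧ ∃ i, P.coeff i = 1 := by
  obtain ⟨P, hP, hroot⟩ := hx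
  obtain ⟨i, hi, hdvd⟩ := exists_dvd_coeff hP
  obtain ⟨Q, hPQ⟩ := (C_dvd_iff_dvd_coeff _ _).2 hdvd
  have hi0 : P.coeff i ≠ 0 := mem_support_iff.1 hi
  refine ⟨Q, ?_, i, ?_⟩
  · rw [hPQ] at hroot
    simpa [hi0] using hroot
  · have h : P.coeff i = P.coeff i * Q.coeff i := by
      conv_lhs => rw [hPQ, coeff_C_mul]
    exact (mul_eq_left₀ hi0).1 h.symm

-- Two successive integral elements satisfy `b - c * x = 1`, so one of them is a unit of `W`.
theorem exists_isIntegral_mul_notMem_nonunits [IsDomain R] [ValuationRing R] [FaithfulSMul R B]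
    {W : ValuationSubring B} {x : B} (hx : IsAlgebraic R x) (hxW : x ∈ W) :
    ∃ s : B, IsIntegral R s ∧ IsIntegral R (s * x) ∧ s ∉ W.nonunits := by
  obtain ⟨P, hroot, i, hi⟩ := exists_aeval_eq_zero_coeff_eq_one hx
  have hone : aeval x (divX^[i] P) - aeval x (divX^[i + 1] P) * x = 1 := by
    rw [aeval_iterate_divX P x i, hi, map_one, add_sub_cancel_left]
  by_contra! hcon
  have hmem (j : ℕ) : W.valuation (aeval x (divX^[j] P)) < 1 :=
    hcon _ (isIntegral_aeval_iterate_divX hroot j) (isIntegral_aeval_iterate_divX_mul hroot j)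
  have hlt := W.valuation.map_sub_lt (hmem i) <| (map_mul W.valuation _ x).trans_lt <|
    mul_lt_one_of_lt_of_le (hmem (i + 1)) ((W.valuation_le_one_iff x).2 hxW)
  rw [hone, map_one] at hlt
  exact hlt.false

theorem le_of_nonunits_integral_le [IsDomain R] [ValuationRing R] [FaithfulSMul R B]
    [Algebra.IsAlgebraic R B] {W W' : ValuationSubring B} (hW' : ∀ r : R, algebraMap R B r ∈ W')
    (h : ∀ y : B, IsIntegral R y → y ∈ W'.nonunits → y ∈ W.nonunits) : W ≤ W' := by
  intro x hx
  obtain ⟨s, hs, hsx, hsW⟩ :=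
    exists_isIntegral_mul_notMem_nonunits (R := R) (Algebra.IsAlgebraic.isAlgebraic x) hx
  have hone : 1 ≤ W'.valuation s := not_lt.1 fun hlt => hsW (h s hs hlt)
  rw [← W'.valuation_le_one_iff]
  calc W'.valuation x ≤ W'.valuation s * W'.valuation x := le_mul_of_one_le_left' hone
    _ = W'.valuation (s * x) := (map_mul _ _ _).symm
    _ ≤ 1 := (W'.valuation_le_one_iff _).2 (mem_valuationSubring_of_isIntegral hW' hsx)

theorem eq_of_nonunits_integral_iff [IsDomain R] [ValuationRing R] [FaithfulSMul R B]
    [Algebra.IsAlgebraic R B] {W W' : ValuationSubring B} (hW : ∀ r : R, algebraMap R B r ∈ W)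
    (hW' : ∀ r : R, algebraMap R B r ∈ W')
    (h : ∀ y : B, IsIntegral R y → (y ∈ W.nonunits ↔ y ∈ W'.nonunits)) : W = W' :=
  le_antisymm (le_of_nonunits_integral_le hW' fun y hy => (h y hy).2)
    (le_of_nonunits_integral_le hW fun y hy => (h y hy).1)

end Denominators

section Center

variable {A B : Type*} [CommRing A] [Field B] [Algebra A B]

/-- The center on `A` of a valuation ring `W` of an `A`-algebra: the prime ideal of the elements of
`A` that have positive valuation. -/
def valuationCenter (W : ValuationSubring B) (hW : ∀ a : A, algebraMap A B a ∈ W) : Ideal A :=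
  (IsLocalRing.maximalIdeal W).comap ((algebraMap A B).codRestrict W.toSubring hW)

theorem mem_valuationCenter {W : ValuationSubring B} {hW : ∀ a : A, algebraMap A B a ∈ W} {a : A} :
    a ∈ valuationCenter W hW ↔ algebraMap A B a ∈ W.nonunits :=
  (ValuationSubring.coe_mem_nonunits_iff (a := (⟨algebraMap A B a, hW a⟩ : W))).symm

instance valuationCenter_isPrime (W : ValuationSubring B) (hW : ∀ a : A, algebraMap A B a ∈ W) :
    (valuationCenter W hW).IsPrime :=
  Ideal.IsPrime.comap _

end Center

section Conjugacy

variable {K B : Type*} [Field K] [Field B] [Algebra K B]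

theorem isInvariant_integralClosure [IsGalois K B] (R : Type*) [CommRing R] [Algebra R K]
    [Algebra R B] [IsScalarTower R K B] [IsIntegrallyClosedIn R K] :
    Algebra.IsInvariant R (integralClosure R B) Gal(B/K) where
  isInvariant b hb := by
    obtain ⟨k, hk⟩ := (InfiniteGalois.mem_range_algebraMap_iff_fixed (k := K) (b : B)).2
      fun g => congrArg Subtype.val (hb g)
    have hint : IsIntegral R k :=
      (isIntegral_algebraMap_iff (algebraMap K B).injective).1 (hk ▸ b.2)
    obtain ⟨r, rfl⟩ := IsIntegrallyClosedIn.algebraMap_eq_of_integral hint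
    exact ⟨r, Subtype.ext ((IsScalarTower.algebraMap_apply R K B r).trans hk)⟩

theorem continuousSMul_integralClosure [Algebra.IsAlgebraic K B] (R : Type*) [CommRing R]
    [Algebra R K] [Algebra R B] [IsScalarTower R K B] [TopologicalSpace (integralClosure R B)]
    [DiscreteTopology (integralClosure R B)] :
    ContinuousSMul Gal(B/K) (integralClosure R B) := by
  rw [continuousSMul_iff_stabilizer_isOpen]
  intro b
  convert stabilizer_isOpen_of_isIntegral (K := K) (b : B) using 1
  ext g
  exact Subtype.ext_iff

theorem exists_gal_forall_mem_nonunits_iff [IsGalois K B] {R : ValuationSubring K}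
    {W W' : ValuationSubring B} (hW : W.comap (algebraMap K B) = R)
    (hW' : W'.comap (algebraMap K B) = R) :
    ∃ σ : Gal(B/K), ∀ y : B, IsIntegral R y → (σ y ∈ W.nonunits ↔ y ∈ W'.nonunits) := by
  let _ : TopologicalSpace (integralClosure R B) := ⊥
  have : DiscreteTopology (integralClosure R B) := ⟨rfl⟩
  have := continuousSMul_integralClosure (K := K) (B := B) R
  have := isInvariant_integralClosure (K := K) (B := B) R
  have hmem {V : ValuationSubring B} (hV : V.comap (algebraMap K B) = R)
      (y : integralClosure R B) : algebraMap _ B y ∈ V :=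
    mem_valuationSubring_of_isIntegral (R := R) (W := V) (fun r => hV.ge r.2)
      ((mem_integralClosure_iff R B).1 y.2)
  have hunder {V : ValuationSubring B} (hV : V.comap (algebraMap K B) = R) (r : R) :
      r ∈ (valuationCenter V (hmem hV)).under R ↔ (r : K) ∈ R.nonunits := by
    have hcomap := mem_nonunits_comap_iff (algebraMap K B) V (x := r)
    rw [hV] at hcomap
    exact mem_valuationCenter.trans hcomap.symm
  obtain ⟨σ, hσ⟩ := Algebra.IsInvariant.exists_smul_of_under_eq_of_profinite (G := Gal(B/K))
    (valuationCenter W' (hmem hW')) (valuationCenter W (hmem hW))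
    (Ideal.ext fun r => (hunder hW' r).trans (hunder hW r).symm)
  refine ⟨σ, fun y hy => ?_⟩
  have hconj := Ideal.smul_mem_pointwise_smul_iff (a := σ) (S := valuationCenter W' (hmem hW'))
    (x := ⟨y, hy⟩)
  rw [← hσ, mem_valuationCenter, mem_valuationCenter] at hconj
  exact hconj

theorem exists_gal_comap_eq_of_isGalois [IsGalois K B] {W W' : ValuationSubring B}
    (h : W.comap (algebraMap K B) = W'.comap (algebraMap K B)) :
    ∃ σ : Gal(B/K), W.comap (σ : B →+* B) = W' := by
  obtain ⟨R, hR⟩ : ∃ R, W.comap (algebraMap K B) = R := ⟨_, rfl⟩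
  obtain ⟨σ, hσ⟩ := exists_gal_forall_mem_nonunits_iff hR (h ▸ hR)
  have : Algebra.IsAlgebraic R B :=
    IsFractionRing.comap_isAlgebraic_iff.2 (inferInstance : Algebra.IsAlgebraic K B)
  refine ⟨σ, eq_of_nonunits_integral_iff (R := R) (fun r => ?_) (fun r => (h ▸ hR).ge r.2) ?_⟩
  · exact (congrArg (· ∈ W) (σ.commutes r)).mpr (hR.ge r.2)
  · exact fun y hy => (mem_nonunits_comap_iff _ W).trans (hσ y hy)

theorem valuationSubring_eq_of_isPurelyInseparable [IsPurelyInseparable K B]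
    {W W' : ValuationSubring B} (h : W.comap (algebraMap K B) = W'.comap (algebraMap K B)) :
    W = W' := by
  obtain ⟨p, _⟩ := ExpChar.exists K
  ext x
  obtain ⟨n, y, hy⟩ := IsPurelyInseparable.pow_mem K p x
  have hmem (V : ValuationSubring B) : x ∈ V ↔ y ∈ V.comap (algebraMap K B) := by
    rw [ValuationSubring.mem_comap, hy, ← V.valuation_le_one_iff, ← V.valuation_le_one_iff,
      map_pow, pow_le_one_iff (pow_ne_zero n (expChar_ne_zero K p))]
  rw [hmem, hmem, h]

theorem exists_gal_comap_eq_of_normal [Normal K B] {W W' : ValuationSubring B}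
    (h : W.comap (algebraMap K B) = W'.comap (algebraMap K B)) :
    ∃ σ : Gal(B/K), W.comap (σ : B →+* B) = W' := by
  let S := separableClosure K B
  obtain ⟨τ, hτ⟩ := exists_gal_comap_eq_of_isGalois (K := K) (B := S)
    (W := W.comap (algebraMap S B)) (W' := W'.comap (algebraMap S B)) (by
      simpa only [ValuationSubring.comap_comap, ← IsScalarTower.algebraMap_eq] using h)
  obtain ⟨σ, rfl⟩ := AlgEquiv.restrictNormalHom_surjective B τ
  refine ⟨σ, valuationSubring_eq_of_isPurelyInseparable (K := S) ?_⟩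
  rw [← hτ, ValuationSubring.comap_comap, ValuationSubring.comap_comap]
  congr 1
  ext x
  exact (AlgEquiv.restrictNormal_commutes σ S x).symm

end Conjugacy

section ValueGroup

variable {Γ : Type*} [LinearOrderedCommGroupWithZero Γ]

theorem exists_ne_valuation_eq_of_sum_eq_zero {A ι : Type*} [Ring A] (v : Valuation A Γ)
    {s : Finset ι} {f : ι → A} (hf : ∀ i ∈ s, v (f i) ≠ 0) (hs : s.Nonempty)
    (hsum : ∑ i ∈ s, f i = 0) : ∃ i ∈ s, ∃ j ∈ s, i ≠ j ∧ v (f i) = v (f j) := by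
  classical
  obtain ⟨i, hi, hmax⟩ := s.exists_max_image (fun i => v (f i)) hs
  by_contra! hne
  refine hf i hi ?_
  rw [← v.map_sum_eq_of_lt hi, hsum, map_zero]
  intro j hj
  obtain ⟨hjs, hji⟩ := Finset.mem_sdiff.1 hj
  exact (hmax j hjs).lt_of_ne (hne j hjs i hi (by simpa using hji))

theorem exists_valuation_pow_eq_algebraMap {K B : Type*} [Field K] [Field B] [Algebra K B]
    (v : Valuation B Γ) {x : B} (hx : IsAlgebraic K x) (hx0 : x ≠ 0) :
    ∃ n : ℕ, ∃ a : K, 0 < n ∧ a ≠ 0 ∧ v x ^ n = v (algebraMap K B a) := by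
  obtain ⟨P, hP0, hP⟩ := hx
  have hcoeff {i : ℕ} (hi : i ∈ P.support) : v (algebraMap K B (P.coeff i)) ≠ 0 := by
    simpa using hi
  have hvx : v x ≠ 0 := v.ne_zero_iff.2 hx0
  obtain ⟨i, hi, j, hj, hij, hval⟩ := exists_ne_valuation_eq_of_sum_eq_zero v (s := P.support)
    (f := fun i => algebraMap K B (P.coeff i) * x ^ i)
    (fun i hi => by simpa [hx0] using hi) (support_nonempty.2 hP0)
    (by rw [← hP, aeval_def, eval₂_eq_sum, Polynomial.sum])
  wlog hlt : i < j generalizing i j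
  · exact this j hj i hi hij.symm hval.symm (hij.lt_or_gt.resolve_left hlt)
  refine ⟨j - i, P.coeff i / P.coeff j, Nat.sub_pos_of_lt hlt,
    div_ne_zero (mem_support_iff.1 hi) (mem_support_iff.1 hj), ?_⟩
  simp only [map_mul, map_pow] at hval
  rw [map_div₀, map_div₀, pow_sub₀ _ hvx hlt.le, eq_div_iff (hcoeff hj), mul_right_comm,
    mul_comm (_ ^ j), ← hval, mul_inv_cancel_right₀ (pow_ne_zero i hvx)]

/-- `g` and `γ` are commensurable: some positive power of `g` is an integral power of `γ`. -/
def HasRationalLog (γ g : Γ) : Prop :=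
  ∃ n : ℕ, ∃ k : ℤ, 0 < n ∧ g ^ n = γ ^ k

open Classical in
/-- The logarithm of `g` to the base `γ` in a linearly ordered value group: the number `k / n` for
which `g ^ n = γ ^ k`, with the junk value `0` when there is none. -/
def rationalLog (γ g : Γ) : ℚ :=
  if h : HasRationalLog γ g then h.choose_spec.choose / h.choose else 0

variable {γ g h : Γ}

theorem rationalLog_eq_div (h0 : 0 < γ) (h1 : γ < 1) {n : ℕ} {k : ℤ} (hn : 0 < n)
    (hg : g ^ n = γ ^ k) : rationalLog γ g = k / n := by
  have hlog : HasRationalLog γ g := ⟨n, k, hn, hg⟩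
  obtain ⟨hm, hgm⟩ := hlog.choose_spec.choose_spec
  rw [rationalLog, dif_pos hlog]
  set m := hlog.choose
  set l := hlog.choose_spec.choose
  have hpow : γ ^ (l * n) = γ ^ (k * m) := by
    rw [zpow_mul, zpow_mul, ← hgm, ← hg, zpow_natCast, zpow_natCast, ← pow_mul, ← pow_mul,
      mul_comm]
  rw [div_eq_div_iff (by positivity) (by positivity)]
  exact_mod_cast zpow_right_injective₀ h0 h1.ne hpow

theorem rationalLog_mul (h0 : 0 < γ) (h1 : γ < 1) (hg : HasRationalLog γ g)
    (hh : HasRationalLog γ h) : rationalLog γ (g * h) = rationalLog γ g + rationalLog γ h := by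
  obtain ⟨n, k, hn, hgn⟩ := hg
  obtain ⟨m, l, hm, hhm⟩ := hh
  have hgh : (g * h) ^ (n * m) = γ ^ (k * m + l * n) := by
    rw [mul_pow, pow_mul, hgn, mul_comm n m, pow_mul, hhm, zpow_add₀ h0.ne', zpow_mul, zpow_mul,
      zpow_natCast, zpow_natCast]
  rw [rationalLog_eq_div h0 h1 hn hgn, rationalLog_eq_div h0 h1 hm hhm,
    rationalLog_eq_div h0 h1 (Nat.mul_pos hn hm) hgh]
  push_cast
  field_simp

theorem rationalLog_le_rationalLog_iff (h0 : 0 < γ) (h1 : γ < 1) (hg : HasRationalLog γ g)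
    (hh : HasRationalLog γ h) : rationalLog γ g ≤ rationalLog γ h ↔ h ≤ g := by
  obtain ⟨n, k, hn, hgn⟩ := hg
  obtain ⟨m, l, hm, hhm⟩ := hh
  have hg' : g ^ (n * m) = γ ^ (k * m) := by rw [pow_mul, hgn, zpow_mul, zpow_natCast]
  have hh' : h ^ (n * m) = γ ^ (l * n) := by
    rw [mul_comm, pow_mul, hhm, zpow_mul, zpow_natCast]
  rw [rationalLog_eq_div h0 h1 hn hgn, rationalLog_eq_div h0 h1 hm hhm,
    div_le_div_iff₀ (by positivity) (by positivity),
    ← pow_le_pow_iff_left₀ (a := h) zero_le zero_le (Nat.mul_pos hn hm).ne', hg', hh',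
    zpow_le_zpow_iff_right_of_lt_one₀ h0 h1]
  norm_cast

theorem rationalLog_one (h0 : 0 < γ) (h1 : γ < 1) : rationalLog γ 1 = 0 := by
  simpa using rationalLog_eq_div (g := 1) (k := 0) h0 h1 one_pos (by simp)

theorem rationalLog_self (h0 : 0 < γ) (h1 : γ < 1) : rationalLog γ γ = 1 := by
  simpa using rationalLog_eq_div (g := γ) (k := 1) h0 h1 one_pos (by simp)

end ValueGroup

theorem addValuation_zpow_eq_coe {K G : Type*} [Field K] [AddCommGroup G] [LinearOrder G]
    [IsOrderedAddMonoid G] (v : AddValuation K (WithTop G)) {x : K} {g : G} (hx : v x = g) (k : ℤ) :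
    v (x ^ k) = ((k • g : G) : WithTop G) := by
  have hx0 : x ≠ 0 := by
    rintro rfl
    simp at hx
  induction k with
  | zero => simp
  | succ k ih => rw [zpow_add_one₀ hx0, v.map_mul, ih, hx, add_one_zsmul, WithTop.coe_add]
  | pred k ih =>
    rw [zpow_sub_one₀ hx0, v.map_mul, ih, v.map_inv, hx, sub_one_zsmul, WithTop.coe_add]
    rfl

theorem zero_le_coe_mul_map_iff {R S : Type*} [Zero R] [LE R] [Semiring S] [LinearOrder S]
    [IsStrictOrderedRing S] {c : S} (hc : 0 < c) {f : R → S}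
    (hf : ∀ r, 0 ≤ f r ↔ 0 ≤ r) (z : WithTop R) :
    0 ≤ (c : WithTop S) * WithTop.map f z ↔ 0 ≤ z := by
  cases z with
  | top => simp [WithTop.mul_top, hc.ne']
  | coe r =>
    rw [WithTop.map_coe, ← WithTop.coe_mul, WithTop.coe_nonneg, WithTop.coe_nonneg,
      mul_nonneg_iff_of_pos_left hc, hf]

namespace FFPrime

variable {K L : Type} [Field K] [Field L]

/-- The prime `v`, as an additive valuation of Mathlib. -/
def toAddValuation (v : FFPrime K) : AddValuation K (WithTop ℤ) :=
  AddValuation.of v.ord v.ord_zero v.ord_one v.ord_add v.ord_mul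

/-- The valuation ring of the prime `v`. -/
def valuationSubring (v : FFPrime K) : ValuationSubring K :=
  v.toAddValuation.toValuation.valuationSubring

theorem mem_valuationSubring_iff (v : FFPrime K) {x : K} :
    x ∈ v.valuationSubring ↔ 0 ≤ v.ord x :=
  Iff.rfl

theorem mem_nonunits_iff (v : FFPrime K) {x : K} :
    x ∈ v.valuationSubring.nonunits ↔ 0 < v.ord x :=
  (Valuation.isEquiv_valuation_valuationSubring v.toAddValuation.toValuation).lt_one_iff_lt_one.symm

theorem ne_zero_of_ord_eq_coe (v : FFPrime K) {x : K} {k : ℤ} (hx : v.ord x = k) : x ≠ 0 := by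
  rintro rfl
  exact WithTop.coe_ne_top (hx.symm.trans v.ord_zero)

theorem exists_ord_eq_coe (v : FFPrime K) {x : K} (hx : x ≠ 0) :
    ∃ k : ℤ, v.ord x = k :=
  (WithTop.ne_top_iff_exists.1 (v.ord_ne_top x hx)).imp fun _ => Eq.symm

theorem ord_zpow_of_ord_eq_one (v : FFPrime K) {t : K} (ht : v.ord t = (1 : ℤ)) (k : ℤ) :
    v.ord (t ^ k) = k :=
  (addValuation_zpow_eq_coe v.toAddValuation ht k).trans (by simp)

theorem valuation_eq_zpow_of_ord_eq (v : FFPrime K) {W : ValuationSubring L} {φ : K →+* L}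
    (hW : W.comap φ = v.valuationSubring) {t x : K} {k : ℤ} (ht : v.ord t = (1 : ℤ))
    (hx : v.ord x = k) : W.valuation (φ x) = W.valuation (φ t) ^ k := by
  have hequiv : (W.valuation.comap φ).IsEquiv v.toAddValuation.toValuation :=
    Valuation.isEquiv_of_val_le_one fun {x} => by
      rw [Valuation.comap_apply, W.valuation_le_one_iff, ← ValuationSubring.mem_comap, hW]
      exact Iff.rfl
  rw [← map_zpow₀, ← map_zpow₀]
  exact hequiv.eq_iff.2 (hx.trans (v.ord_zpow_of_ord_eq_one ht k).symm)

theorem valuationSubring_comap_eq_of_liesOver {w : FFPrime L} {v : FFPrime K} {φ : K →+* L}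
    (h : w.LiesOver v φ) : w.valuationSubring.comap φ = v.valuationSubring := by
  obtain ⟨e, he, hord⟩ := h
  ext x
  rw [ValuationSubring.mem_comap, mem_valuationSubring_iff, mem_valuationSubring_iff, hord]
  simpa using zero_le_coe_mul_map_iff (f := id) (Int.natCast_pos.2 he) (fun _ => Iff.rfl) (v.ord x)

end FFPrime

namespace FFVal

variable {K B : Type} [Field K] [Field B]

/-- The valuation `V`, as an additive valuation of Mathlib. -/
def toAddValuation (V : FFVal B) : AddValuation B (WithTop ℚ) :=
  AddValuation.of V.ord V.ord_zero V.ord_one V.ord_add V.ord_mul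

/-- The valuation ring of `V`. -/
def valuationSubring (V : FFVal B) : ValuationSubring B :=
  V.toAddValuation.toValuation.valuationSubring

theorem mem_valuationSubring_iff (V : FFVal B) {x : B} :
    x ∈ V.valuationSubring ↔ 0 ≤ V.ord x :=
  Iff.rfl

theorem mem_nonunits_iff (V : FFVal B) {x : B} : x ∈ V.valuationSubring.nonunits ↔ 0 < V.ord x :=
  (Valuation.isEquiv_valuation_valuationSubring V.toAddValuation.toValuation).lt_one_iff_lt_one.symm

theorem ord_eq_of_valuation_eq (V : FFVal B) {x y : B}
    (hxy : V.valuationSubring.valuation x = V.valuationSubring.valuation y) : V.ord x = V.ord y :=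
  (Valuation.isEquiv_valuation_valuationSubring V.toAddValuation.toValuation).eq_iff.2 hxy

theorem restrictsTo_of_comap_eq {V : FFVal B} {v : FFPrime K} {φ : K →+* B}
    (h : V.valuationSubring.comap φ = v.valuationSubring) : V.RestrictsTo v φ := by
  obtain ⟨t, ht⟩ := v.ord_surj 1
  have hφt : φ t ≠ 0 := (map_ne_zero φ).2 (v.ne_zero_of_ord_eq_coe ht)
  obtain ⟨c, hc⟩ := WithTop.ne_top_iff_exists.1 (V.ord_ne_top (φ t) hφt)
  have hpos : 0 < V.ord (φ t) := by
    rw [← V.mem_nonunits_iff, ← mem_nonunits_comap_iff, h, v.mem_nonunits_iff, ht]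
    exact WithTop.coe_pos.2 one_pos
  refine ⟨c, WithTop.coe_pos.1 (hc ▸ hpos), fun x => ?_⟩
  rcases eq_or_ne x 0 with rfl | hx
  · have hc0 : c ≠ 0 := fun h0 => by simp [← hc, h0] at hpos
    simp [V.ord_zero, v.ord_zero, WithTop.mul_top, hc0]
  · obtain ⟨k, hk⟩ := v.exists_ord_eq_coe hx
    calc V.ord (φ x) = V.ord (φ t ^ k) := V.ord_eq_of_valuation_eq <| by
          rw [map_zpow₀, v.valuation_eq_zpow_of_ord_eq h ht hk]
      _ = ((k • c : ℚ) : WithTop ℚ) := addValuation_zpow_eq_coe V.toAddValuation hc.symm k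
      _ = c * WithTop.map (fun n : ℤ => (n : ℚ)) (v.ord x) := by simp [hk, mul_comm]

theorem comap_eq_of_restrictsTo {V : FFVal B} {v : FFPrime K} {φ : K →+* B}
    (h : V.RestrictsTo v φ) : V.valuationSubring.comap φ = v.valuationSubring := by
  obtain ⟨c, hc, hord⟩ := h
  ext x
  rw [ValuationSubring.mem_comap, mem_valuationSubring_iff, FFPrime.mem_valuationSubring_iff, hord]
  exact zero_le_coe_mul_map_iff hc (fun _ => Int.cast_nonneg_iff) (v.ord x)

section OfValuation

variable {Γ : Type*} [LinearOrderedCommGroupWithZero Γ]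

open Classical in
/-- The rational-valued valuation equivalent to a valuation `v` all of whose values are
commensurable with one value `γ`. -/
def ofValuation (v : Valuation B Γ) {γ : Γ} (h0 : 0 < γ) (h1 : γ < 1) (hγ : ∃ x, v x = γ)
    (hlog : ∀ x, x ≠ 0 → HasRationalLog γ (v x)) : FFVal B where
  ord x := if x = 0 then ⊤ else (rationalLog γ (v x) : WithTop ℚ)
  ord_zero := if_pos rfl
  ord_ne_top x hx := by simp [hx]
  ord_one := by simp [rationalLog_one h0 h1]
  ord_mul x y := by
    by_cases hx : x = 0
    · simp [hx]
    by_cases hy : y = 0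
    · simp [hy]
    simp [hx, hy, rationalLog_mul h0 h1 (hlog x hx) (hlog y hy)]
  ord_add x y := by
    by_cases hx : x = 0
    · simp [hx]
    by_cases hy : y = 0
    · simp [hy]
    by_cases hxy : x + y = 0
    · simp [hxy]
    have hle := v.map_add x y
    simp only [hx, hy, hxy, if_false, min_le_iff, WithTop.coe_le_coe]
    rwa [rationalLog_le_rationalLog_iff h0 h1 (hlog x hx) (hlog _ hxy),
      rationalLog_le_rationalLog_iff h0 h1 (hlog y hy) (hlog _ hxy), ← le_max_iff]
  nontrivial := by
    obtain ⟨x, rfl⟩ := hγ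
    have hx : x ≠ 0 := v.ne_zero_iff.1 h0.ne'
    exact ⟨x, by simp [hx, rationalLog_self h0 h1], by simp [hx]⟩

theorem valuationSubring_ofValuation (v : Valuation B Γ) {γ : Γ} (h0 : 0 < γ) (h1 : γ < 1)
    (hγ : ∃ x, v x = γ) (hlog : ∀ x, x ≠ 0 → HasRationalLog γ (v x)) :
    (ofValuation v h0 h1 hγ hlog).valuationSubring = v.valuationSubring := by
  ext x
  rw [mem_valuationSubring_iff, v.mem_valuationSubring_iff]
  by_cases hx : x = 0
  · simp [ofValuation, hx]
  · have hone : HasRationalLog γ 1 := ⟨1, 0, one_pos, by simp⟩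
    rw [← rationalLog_le_rationalLog_iff h0 h1 hone (hlog x hx), rationalLog_one h0 h1]
    simp [ofValuation, hx]

end OfValuation

theorem exists_valuationSubring_eq [Algebra K B] [Algebra.IsAlgebraic K B] (v : FFPrime K)
    {W : ValuationSubring B} (hW : W.comap (algebraMap K B) = v.valuationSubring) :
    ∃ V : FFVal B, V.valuationSubring = W := by
  obtain ⟨t, ht⟩ := v.ord_surj 1
  have hpos : 0 < W.valuation (algebraMap K B t) := by
    simpa [zero_lt_iff] using v.ne_zero_of_ord_eq_coe ht
  have hlt : W.valuation (algebraMap K B t) < 1 := by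
    rw [← ValuationSubring.mem_nonunits_iff, ← mem_nonunits_comap_iff, hW, v.mem_nonunits_iff, ht]
    exact WithTop.coe_pos.2 one_pos
  have hlog (x : B) (hx : x ≠ 0) :
      HasRationalLog (W.valuation (algebraMap K B t)) (W.valuation x) := by
    obtain ⟨n, a, hn, ha, hxa⟩ := exists_valuation_pow_eq_algebraMap W.valuation
      (Algebra.IsAlgebraic.isAlgebraic (R := K) x) hx
    obtain ⟨k, hk⟩ := v.exists_ord_eq_coe ha
    exact ⟨n, k, hn, hxa.trans (v.valuation_eq_zpow_of_ord_eq hW ht hk)⟩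
  refine ⟨ofValuation W.valuation hpos hlt ⟨_, rfl⟩ hlog, ?_⟩
  rw [valuationSubring_ofValuation, W.valuationSubring_valuation]

theorem exists_restrictsTo [Algebra K B] [Algebra.IsAlgebraic K B] (v : FFPrime K) :
    ∃ V : FFVal B, V.RestrictsTo v (algebraMap K B) := by
  obtain ⟨W, hW⟩ := exists_valuationSubring_comap_eq (algebraMap K B) v.valuationSubring
  obtain ⟨V, rfl⟩ := exists_valuationSubring_eq v hW
  exact ⟨V, restrictsTo_of_comap_eq hW⟩

end FFVal

namespace FFPrime

variable {K L M : Type} [Field K] [Field L] [Field M]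

/-- The prime of `M` corresponding to the prime `w` of `L` under a field isomorphism `e`. -/
def comap (w : FFPrime L) (e : M ≃+* L) : FFPrime M where
  ord x := w.ord (e x)
  ord_zero := by rw [map_zero, w.ord_zero]
  ord_ne_top x hx := w.ord_ne_top _ ((map_ne_zero e).2 hx)
  ord_one := by rw [map_one, w.ord_one]
  ord_mul x y := by rw [map_mul, w.ord_mul]
  ord_add x y := by rw [map_add]; exact w.ord_add _ _
  ord_surj n := (e.surjective.exists (p := fun x => w.ord x = n)).1 (w.ord_surj n)

theorem comap_comap_symm (w : FFPrime L) (e : M ≃+* L) : (w.comap e).comap e.symm = w := by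
  simp [comap]

theorem valuationSubring_comap (w : FFPrime L) (e : M ≃+* L) :
    (w.comap e).valuationSubring = w.valuationSubring.comap (e : M →+* L) :=
  rfl

theorem HasResidueCard.comap {w : FFPrime L} {n : ℕ} (h : w.HasResidueCard n) (e : M ≃+* L) :
    (w.comap e).HasResidueCard n := by
  obtain ⟨s, rfl, hs, hsep, hcover⟩ := h
  refine ⟨s.map e.symm.toEquiv.toEmbedding, s.card_map _, ?_, ?_, fun z hz => ?_⟩
  · simpa [FFPrime.comap, e.surjective.forall] using hs
  · simpa [FFPrime.comap, e.surjective.forall] using hsep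
  · simpa [FFPrime.comap, e.surjective.exists] using hcover (e z) hz

theorem hasResidueCard_comap (w : FFPrime L) (e : M ≃+* L) :
    (w.comap e).HasResidueCard = w.HasResidueCard :=
  funext fun _ => propext ⟨fun h => w.comap_comap_symm e ▸ h.comap e.symm, fun h => h.comap e⟩

theorem resDeg_comap (w : FFPrime L) (v : FFPrime K) (e : M ≃+* L) :
    (w.comap e).resDeg v = w.resDeg v := by
  rw [resDeg, resDeg, hasResidueCard_comap]

theorem ramIdx_comap [Algebra K L] [Algebra K M] (w : FFPrime L) (v : FFPrime K)
    (e : M ≃ₐ[K] L) :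
    (w.comap e.toRingEquiv).ramIdx v (algebraMap K M) = w.ramIdx v (algebraMap K L) :=
  congrArg (w.ramIdx v) e.toAlgHom.comp_algebraMap

end FFPrime

namespace FFVal

variable {K B : Type} [Field K] [Field B] [Algebra K B]

theorem exists_restrictsTo_comap [Normal K B] {V : FFVal B} {v : FFPrime K}
    (hV : V.RestrictsTo v (algebraMap K B)) (F : IntermediateField K B) {w : FFPrime F}
    (hw : w.LiesOver v (algebraMap K F)) :
    ∃ (L : IntermediateField K B) (e : L ≃ₐ[K] F),
      V.RestrictsTo (w.comap e.toRingEquiv) L.val.toRingHom := by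
  obtain ⟨W, hW⟩ := exists_valuationSubring_comap_eq F.val.toRingHom w.valuationSubring
  have hWv : W.comap (algebraMap K B) = v.valuationSubring := by
    rw [← FFPrime.valuationSubring_comap_eq_of_liesOver hw, ← hW]
    rfl
  obtain ⟨σ, hσ⟩ := exists_gal_comap_eq_of_normal ((comap_eq_of_restrictsTo hV).trans hWv.symm)
  refine ⟨F.map σ.toAlgHom, (F.equivMap σ.toAlgHom).symm, restrictsTo_of_comap_eq ?_⟩
  rw [FFPrime.valuationSubring_comap, ← hW, ← hσ]
  ext y
  obtain ⟨x, rfl⟩ := (F.equivMap σ.toAlgHom).surjective y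
  simp

end FFVal

theorem statement19_general (q : ℕ) (K : Type) [Field K] (BK : Type) [Field BK] [Algebra K BK]
    [Normal K BK] (v : FFPrime K)
    (hqb : ∀ V : FFVal BK, V.RestrictsTo v (algebraMap K BK) →
      ∃ C : ℕ, ∀ L : IntermediateField K BK, FiniteDimensional K L →
        ∀ w : FFPrime L, V.RestrictsTo w L.val.toRingHom →
          padicValNat q (w.ramIdx v (algebraMap K L)) ≤ C ∧
          padicValNat q (w.resDeg v) ≤ C) :
    ∃ C : ℕ, ∀ F : IntermediateField K BK, FiniteDimensional K F →
      ∀ w : FFPrime F, w.LiesOver v (algebraMap K F) →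
        padicValNat q (w.ramIdx v (algebraMap K F)) ≤ C ∧
        padicValNat q (w.resDeg v) ≤ C := by
  obtain ⟨V, hV⟩ := FFVal.exists_restrictsTo (B := BK) v
  obtain ⟨C, hC⟩ := hqb V hV
  refine ⟨C, fun F hF w hw => ?_⟩
  obtain ⟨L, e, hL⟩ := FFVal.exists_restrictsTo_comap hV F hw
  have hbound := hC L e.symm.toLinearEquiv.finiteDimensional _ hL
  rwa [FFPrime.ramIdx_comap, FFPrime.resDeg_comap] at hbound

/-- If `BK/K` is a Galois algebraic extension of a global function
field and the prime `v` of `K` is `q`-bounded in `BK` (along every prime of `BK` over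
`v`, the `q`-adic valuations of the ramification indices and residue degrees are
bounded), then `v` is uniformly `q`-bounded in `BK`: a single bound works for all
finite subextensions and all primes over `v`. -/
theorem statement19 (p q : ℕ) [Fact p.Prime] (hq : q.Prime) (hqp : q ≠ p)
    (K : Type) [Field K] [Algebra (RatFunc (ZMod p)) K]
    [FiniteDimensional (RatFunc (ZMod p)) K]
    (BK : Type) [Field BK] [Algebra K BK] [IsGalois K BK]
    (v : FFPrime K)
    (hqb : ∀ V : FFVal BK, V.RestrictsTo v (algebraMap K BK) →
      ∃ C : ℕ, ∀ L : IntermediateField K BK, FiniteDimensional K L →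
        ∀ w : FFPrime L, V.RestrictsTo w L.val.toRingHom →
          padicValNat q (w.ramIdx v (algebraMap K L)) ≤ C ∧
          padicValNat q (w.resDeg v) ≤ C) :
    ∃ C : ℕ, ∀ F : IntermediateField K BK, FiniteDimensional K F →
      ∀ w : FFPrime F, w.LiesOver v (algebraMap K F) →
        padicValNat q (w.ramIdx v (algebraMap K F)) ≤ C ∧
        padicValNat q (w.resDeg v) ≤ C := by
  exact statement19_general q K BK v hqb
end
end
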